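/- arXiv:1308.3806 — 4 statements merged into one kernel-verified Lean document; each statement's English description precedes it below -/
import Mathlib

section
/- Let p be a prime, n ≥ 1 an integer and τ > 1 + 1/n a real number. Then the Hausdorff dimension of W*_{τ,n}(p), computed in ℚ_p^n with the metric induced by the p-adic supremum norm, equals (n+1)/τ. -/
/-!
The set `W*` consists of points that are approximable at order `τ`. A good approximation `(r, q)`
with `p ∤ q` exists only for points of `ℤ_pⁿ`, so approximable points outside `ℤ_pⁿ` belong to `W*`;
it suffices to bound the dimension of the approximable points from above, and that of the
approximable points in one coset `(p⁻¹, …, p⁻¹) + ℤ_pⁿ` from below.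

Upper bound (`dimH_WStarPadic_le`). A large power of `p` dividing `q` also divides `r` and can be
cancelled, so an irrational approximable point is approximable by pairs with bounded `v_p(q)`
(`rational_or_infinite_approx`). For such pairs `|qx - r|_p < H ^ (-τ)` puts `x` in a ball of radius
comparable to `H ^ (-τ)` around `r / q`, and the Borel–Cantelli lemma for Hausdorff measures applies,
as `∑ H ^ (-τ s)` over `ℤⁿ × ℕ` converges for `τ s > n + 1`.

Lower bound. By Dirichlet's theorem and a count of the exceptions, at least half of all residue
vectors modulo `p ^ m`, with `m = (n + 1) t - k₀`, are congruent to a fraction `r / q` with `p ∤ q` of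
height at most `p ^ (n t)` (`card_goodResidues`). For rapidly increasing `t_j`, consider the sums
`x = (p⁻¹, …, p⁻¹) + ∑ p ^ (l_j) z_j`, where `z_j` runs through such fractions, one for each good
residue vector. A partial sum is a fraction of height at most `H_j` whose denominator is divisible by
`p` (`exists_pair_partial_sum`), and the next level `l_{j+1}` is chosen just large enough that
`H_{j+1} ^ τ ≤ p ^ (l_{j+1})`, so that `x` is approximable (`mem_WStarPadic_of_cantor`). The uniform
measure on these sums gives mass at most `2 ρ ^ s` to balls of radius `ρ = p ^ (-k)`, for any
`s < (n + 1) / τ` (`digitMeasure_ball_le`): inside a cell of level `j` the residues are spread evenly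
down to the scale `l_j + m_j`, and the count `p ^ (n m_j) / 2` of the cells of level `j + 1` exceeds
`p ^ (s l_{j+1})` since `l_{j+1} ≈ τ n t_j` for large `t_j`. The mass distribution principle
(`measure_le_hausdorffMeasure`) concludes.
-/

open MeasureTheory Filter
open scoped ENNReal

noncomputable instance (p : ℕ) [Fact p.Prime] : MeasurableSpace ℚ_[p] := borel _
instance (p : ℕ) [Fact p.Prime] : BorelSpace ℚ_[p] := ⟨rfl⟩

/-- The approximation condition `|qx - r|_p < max(|r|, q)^{-τ}` for
`(r, q) ∈ ℤⁿ × ℕ` (with `q ≥ 1`) and `x ∈ ℚ_pⁿ`, where `|·|_p` is the `p`-adic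
supremum norm and `|r|` the supremum norm of the integer vector `r`. -/
def PadicApprox (p : ℕ) [Fact p.Prime] (n : ℕ) (τ : ℝ) (x : Fin n → ℚ_[p])
    (rq : (Fin n → ℤ) × ℕ) : Prop :=
  0 < rq.2 ∧ ∀ i, ‖(rq.2 : ℚ_[p]) * x i - ((rq.1 i : ℤ) : ℚ_[p])‖ <
    ((max rq.2 (Finset.univ.sup fun j => (rq.1 j).natAbs) : ℕ) : ℝ) ^ (-τ)

/-- The liminf set `W*_{τ,n}(p)`: points of `ℚ_pⁿ` approximable at order `τ` by
infinitely many `(r, q)` with `p ∣ q`, and only finitely many with `p ∤ q`. -/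
def WStarPadic (p : ℕ) [Fact p.Prime] (n : ℕ) (τ : ℝ) : Set (Fin n → ℚ_[p]) :=
  {x | {rq : (Fin n → ℤ) × ℕ | p ∣ rq.2 ∧ PadicApprox p n τ x rq}.Infinite ∧
    {rq : (Fin n → ℤ) × ℕ | ¬ p ∣ rq.2 ∧ PadicApprox p n τ x rq}.Finite}

/-! ### Heights and the upper bound -/

/-- The height `max(|r|, q)` of the integer vector `(r, q)`. -/
def pairHeight {n : ℕ} (rq : (Fin n → ℤ) × ℕ) : ℕ :=
  max rq.2 (Finset.univ.sup fun j => (rq.1 j).natAbs)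

/-- Borel–Cantelli lemma for Hausdorff measures. -/
lemma hausdorffMeasure_limsup_eq_zero {X ι : Type*} [EMetricSpace X] [MeasurableSpace X]
    [BorelSpace X] [Countable ι] {d : ℝ} (hd : 0 < d) (U : ι → Set X) (f : ι → ℝ≥0∞)
    (hU : ∀ i, Metric.ediam (U i) ≤ f i) (hf : ∑' i, f i ^ d ≠ ∞) :
    μH[d] {x | {i | x ∈ U i}.Infinite} = 0 := by
  have htail := ENNReal.tendsto_tsum_compl_atTop_zero hf
  have hr : Tendsto (fun F : Finset ι => (∑' i : {x // x ∉ F}, f i ^ d) ^ (1 / d)) atTop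
      (nhds 0) := by
    have := (ENNReal.continuous_rpow_const (y := 1 / d)).tendsto (0 : ℝ≥0∞) |>.comp htail
    rwa [ENNReal.zero_rpow_of_pos (by positivity)] at this
  have key := Measure.hausdorffMeasure_le_liminf_tsum (ι := fun F : Finset ι => {x // x ∉ F})
    d {x | {i | x ∈ U i}.Infinite} _ hr (fun F i => U i) ?_ ?_
  · refine le_antisymm (key.trans ?_) bot_le
    calc liminf (fun F : Finset ι => ∑' i : {x // x ∉ F}, Metric.ediam (U i) ^ d) atTop
        ≤ liminf (fun F : Finset ι => ∑' i : {x // x ∉ F}, f i ^ d) atTop := by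
          refine liminf_le_liminf (Eventually.of_forall fun F => ?_)
          exact ENNReal.tsum_le_tsum fun i => ENNReal.rpow_le_rpow (hU i) hd.le
      _ = 0 := htail.liminf_eq
  · refine Eventually.of_forall fun F i => (hU i).trans ?_
    have h1 : f i = (f i ^ d) ^ (1 / d) := by
      rw [← ENNReal.rpow_mul, mul_one_div_cancel hd.ne', ENNReal.rpow_one]
    rw [h1]
    exact ENNReal.rpow_le_rpow (ENNReal.le_tsum (f := fun i : {x // x ∉ F} => f i ^ d) i)
      (by positivity)
  · refine Eventually.of_forall fun F x hx => ?_
    obtain ⟨i, hi, hiF⟩ := Set.Infinite.exists_notMem_finset hx F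
    exact Set.mem_iUnion.2 ⟨⟨i, hiF⟩, hi⟩

/-- The heights are norms of distinct vectors of the lattice `ℤ ^ (n + 1)`. -/
lemma summable_pairHeight (n : ℕ) {σ : ℝ} (hσ : (n : ℝ) + 1 < σ) :
    Summable fun rq : (Fin n → ℤ) × ℕ => (pairHeight rq : ℝ) ^ (-σ) := by
  let b := Pi.basisFun ℝ (Fin (n + 1))
  let L : Submodule ℤ (Fin (n + 1) → ℝ) := Submodule.span ℤ (Set.range b)
  have hrank : Module.finrank ℤ L = n + 1 := by
    rw [ZLattice.rank ℝ L]; simp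
  have hs := ZLattice.summable_norm_rpow L (-σ) (by rw [hrank]; push_cast; linarith)
  have hmem : ∀ v : Fin (n + 1) → ℤ, (fun i => (v i : ℝ)) ∈ L := by
    intro v
    have : (fun i => (v i : ℝ)) = ∑ i, v i • b i := by
      ext j
      simp [b, Finset.sum_apply, Pi.single_apply]
    rw [this]
    exact Submodule.sum_mem _ fun i _ => Submodule.smul_mem _ _ (Submodule.subset_span ⟨i, rfl⟩)
  let v : (Fin n → ℤ) × ℕ → (Fin (n + 1) → ℤ) := fun rq => Fin.cons (rq.2 : ℤ) rq.1
  let φ : (Fin n → ℤ) × ℕ → L := fun rq => ⟨fun i => (v rq i : ℝ), hmem _⟩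
  have hφ : Function.Injective φ := by
    intro a c h
    have h1 : ∀ i, (v a i : ℝ) = v c i := fun i => congrFun (congrArg Subtype.val h) i
    have h2 : ∀ i, v a i = v c i := fun i => by exact_mod_cast h1 i
    refine Prod.ext (funext fun i => ?_) ?_
    · simpa [v] using h2 i.succ
    · simpa [v] using h2 0
  refine (hs.comp_injective hφ).congr fun rq => ?_
  symm
  change _ ^ (-σ) = ‖φ rq‖ ^ (-σ)
  congr 1
  have h0 : ‖φ rq‖ = ‖(fun i => (v rq i : ℝ))‖ := rfl
  rw [h0]
  apply le_antisymm
  · rw [pairHeight, Nat.cast_max]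
    apply max_le
    · have := norm_le_pi_norm (fun i => (v rq i : ℝ)) 0
      simpa [v] using this
    · rcases Nat.eq_zero_or_pos n with rfl | hn
      · simp
      have : Nonempty (Fin n) := ⟨⟨0, hn⟩⟩
      obtain ⟨j, -, hj⟩ := Finset.exists_mem_eq_sup (Finset.univ : Finset (Fin n))
        Finset.univ_nonempty fun j => (rq.1 j).natAbs
      rw [hj]
      have := norm_le_pi_norm (fun i => (v rq i : ℝ)) j.succ
      simpa [v, Nat.cast_natAbs] using this
  · rw [pi_norm_le_iff_of_nonneg (by positivity)]
    intro i
    refine Fin.cases ?_ (fun j => ?_) i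
    · simp [v, pairHeight]
    · have h3 : (rq.1 j).natAbs ≤ pairHeight rq :=
        (Finset.le_sup (f := fun j => (rq.1 j).natAbs) (Finset.mem_univ j)).trans (le_max_right _ _)
      have h4 : ((rq.1 j).natAbs : ℝ) ≤ pairHeight rq := by exact_mod_cast h3
      simpa [v, Nat.cast_natAbs] using h4

lemma natAbs_le_pairHeight {n : ℕ} (rq : (Fin n → ℤ) × ℕ) (j : Fin n) :
    (rq.1 j).natAbs ≤ pairHeight rq :=
  (Finset.le_sup (f := fun j => (rq.1 j).natAbs) (Finset.mem_univ j)).trans (le_max_right _ _)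

lemma pairHeight_le_iff {n : ℕ} (rq : (Fin n → ℤ) × ℕ) (B : ℕ) :
    pairHeight rq ≤ B ↔ rq.2 ≤ B ∧ ∀ j, (rq.1 j).natAbs ≤ B := by
  simp [pairHeight]

lemma finite_pairHeight_le (n B : ℕ) : {rq : (Fin n → ℤ) × ℕ | pairHeight rq ≤ B}.Finite := by
  refine ((Set.finite_Icc (fun _ : Fin n => -(B : ℤ)) (fun _ => (B : ℤ))).prod
    (Set.finite_Icc 0 B)).subset fun rq h => ?_
  obtain ⟨h1, h2⟩ := (pairHeight_le_iff rq B).1 h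
  refine ⟨⟨fun i => ?_, fun i => ?_⟩, ⟨Nat.zero_le _, h1⟩⟩
  all_goals have := h2 i; simp only; omega

lemma mul_pairHeight_le {n : ℕ} (c : ℕ) (rq rq' : (Fin n → ℤ) × ℕ) (h1 : rq.2 = c * rq'.2)
    (h2 : ∀ i, rq.1 i = c * rq'.1 i) : c * pairHeight rq' ≤ pairHeight rq := by
  rcases Nat.eq_zero_or_pos c with rfl | hc
  · simp
  rw [mul_comm, ← Nat.le_div_iff_mul_le hc, pairHeight_le_iff]
  refine ⟨?_, fun j => ?_⟩
  · rw [Nat.le_div_iff_mul_le hc, mul_comm, ← h1]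
    exact le_max_left _ _
  · rw [Nat.le_div_iff_mul_le hc, mul_comm]
    have := natAbs_le_pairHeight rq j
    rwa [h2, Int.natAbs_mul, Int.natAbs_natCast] at this

lemma norm_int_le_inv_pow_iff (p : ℕ) [Fact p.Prime] (k : ℤ) (d : ℕ) :
    ‖(k : ℚ_[p])‖ ≤ ((p : ℝ) ^ d)⁻¹ ↔ ((p ^ d : ℕ) : ℤ) ∣ k := by
  have := Padic.norm_int_le_pow_iff_dvd (p := p) k d
  rw [zpow_neg, zpow_natCast] at this
  rw [this, Nat.cast_pow]

/-- Every point with infinitely many approximations is rational, or has, for some `K`, infinitely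
many approximations whose denominator `q` satisfies `p ^ (K + 1) ∤ q`. If `‖x‖ ≤ p ^ K` and
`v_p(q) = K + d`, then `p ^ d` divides all of `(r, q)`, and cancelling it leaves an approximation
with error below `p ^ d H ^ (-τ) ≤ H ^ (1 - τ)`, where `H` is the height of `(r, q)`. If only
finitely many approximations arise by this cancellation and none of them is exact, then `H` is
bounded. -/
lemma rational_or_infinite_approx (p : ℕ) [Fact p.Prime] (n : ℕ) {τ : ℝ} (hτ : 1 < τ)
    (x : Fin n → ℚ_[p]) (hx : {rq : (Fin n → ℤ) × ℕ | PadicApprox p n τ x rq}.Infinite) :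
    (∃ rq : (Fin n → ℤ) × ℕ, 0 < rq.2 ∧ ∀ i, (rq.2 : ℚ_[p]) * x i - (rq.1 i : ℚ_[p]) = 0) ∨
    ∃ K : ℕ, {rq : (Fin n → ℤ) × ℕ | PadicApprox p n τ x rq ∧ padicValNat p rq.2 ≤ K}.Infinite := by
  have hp1 : (1 : ℝ) < p := by exact_mod_cast (Fact.out : p.Prime).one_lt
  have hp0 : (0 : ℝ) < p := by linarith
  by_contra! hcon
  obtain ⟨hrat, hfin⟩ := hcon
  obtain ⟨K, hK⟩ : ∃ K : ℕ, ∀ i, ‖x i‖ ≤ (p : ℝ) ^ K := by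
    obtain ⟨K, hK⟩ := pow_unbounded_of_one_lt ‖x‖ hp1
    exact ⟨K, fun i => (norm_le_pi_norm x i).trans hK.le⟩
  have hSK := hfin K
  obtain ⟨ε, hε, hεmin⟩ : ∃ ε > 0, ∀ rq : (Fin n → ℤ) × ℕ, PadicApprox p n τ x rq →
      padicValNat p rq.2 ≤ K → ∃ i, ε ≤ ‖(rq.2 : ℚ_[p]) * x i - (rq.1 i : ℚ_[p])‖ := by
    let N : (Fin n → ℤ) × ℕ → ℝ := fun rq => ‖fun i => (rq.2 : ℚ_[p]) * x i - (rq.1 i : ℚ_[p])‖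
    have hN : ∀ rq, PadicApprox p n τ x rq → 0 < N rq := by
      intro rq hrq
      obtain ⟨i, hi⟩ := hrat rq hrq.1
      exact norm_pos_iff.2 fun h => hi (congrFun h i)
    obtain ⟨ε, hε, h⟩ : ∃ ε > 0, ∀ rq : (Fin n → ℤ) × ℕ, PadicApprox p n τ x rq →
      padicValNat p rq.2 ≤ K → ε ≤ N rq := by
      rcases Set.eq_empty_or_nonempty
        {rq : (Fin n → ℤ) × ℕ | PadicApprox p n τ x rq ∧ padicValNat p rq.2 ≤ K} with he | hne
      · refine ⟨1, one_pos, fun rq h1 h2 => ?_⟩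
        exact absurd (show rq ∈ (∅ : Set _) from he ▸ ⟨h1, h2⟩) (Set.notMem_empty _)
      · obtain ⟨r0, hr0, hmin⟩ := Set.exists_min_image _ N hSK hne
        exact ⟨N r0, hN _ hr0.1, fun rq h1 h2 => hmin rq ⟨h1, h2⟩⟩
    refine ⟨ε, hε, fun rq h1 h2 => ?_⟩
    by_contra! hc
    exact absurd (h rq h1 h2) (not_le.2 ((pi_norm_lt_iff hε).2 hc))
  apply hx
  obtain ⟨B, hB⟩ := exists_nat_ge ((1 / ε) ^ (1 / (τ - 1)))
  refine (finite_pairHeight_le n B).subset fun rq hrq => ?_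
  obtain ⟨hq, happ⟩ := hrq
  change ∀ i, _ < (pairHeight rq : ℝ) ^ (-τ) at happ
  have hHq : rq.2 ≤ pairHeight rq := le_max_left _ _
  have hH1 : (1 : ℝ) ≤ pairHeight rq := by exact_mod_cast (show 1 ≤ _ from hq).trans hHq
  -- `p ^ d` is the power of `p` to be cancelled; `d = 0` by truncation if `v_p(q) ≤ K`
  obtain ⟨d, hd⟩ : ∃ d, d = padicValNat p rq.2 - K := ⟨_, rfl⟩
  have hdv : p ^ d ∣ rq.2 := (pow_dvd_pow p (by omega)).trans pow_padicValNat_dvd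
  have hpd : 0 < p ^ d := pow_pos (Fact.out : p.Prime).pos d
  have hdH : ((p : ℝ) ^ d) ≤ pairHeight rq := by
    exact_mod_cast (Nat.le_of_dvd hq hdv).trans hHq
  have hHpos : (0 : ℝ) < pairHeight rq := by linarith
  have hHτ : (pairHeight rq : ℝ) ^ (-τ) ≤ ((p : ℝ) ^ d)⁻¹ := by
    rw [Real.rpow_neg hHpos.le]
    apply inv_anti₀ (by positivity)
    calc (p : ℝ) ^ d ≤ pairHeight rq := hdH
      _ = (pairHeight rq : ℝ) ^ (1 : ℝ) := (Real.rpow_one _).symm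
      _ ≤ _ := Real.rpow_le_rpow_of_exponent_le hH1 hτ.le
  have hrd : ∀ i, ((p ^ d : ℕ) : ℤ) ∣ rq.1 i := by
    intro i
    rcases Nat.eq_zero_or_pos d with h0 | h0
    · simp [h0]
    have hqx : ‖(rq.2 : ℚ_[p]) * x i‖ ≤ ((p : ℝ) ^ d)⁻¹ := by
      rw [norm_mul]
      have h1 : ‖(rq.2 : ℚ_[p])‖ ≤ ((p : ℝ) ^ (d + K))⁻¹ := by
        have h2 : p ^ (d + K) ∣ rq.2 := (pow_dvd_pow p (by omega)).trans pow_padicValNat_dvd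
        exact_mod_cast (norm_int_le_inv_pow_iff p (rq.2 : ℤ) (d + K)).2 (by exact_mod_cast h2)
      calc _ ≤ ((p : ℝ) ^ (d + K))⁻¹ * (p : ℝ) ^ K := by gcongr; exact hK i
        _ = _ := by rw [pow_add]; field_simp
    have h4 : ‖((rq.1 i : ℤ) : ℚ_[p])‖ ≤ ((p : ℝ) ^ d)⁻¹ := by
      have h5 : ((rq.1 i : ℤ) : ℚ_[p]) =
          (rq.2 : ℚ_[p]) * x i + -((rq.2 : ℚ_[p]) * x i - (rq.1 i : ℚ_[p])) := by ring
      rw [h5]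
      refine (Padic.nonarchimedean _ _).trans (max_le hqx ?_)
      rw [norm_neg]
      exact (happ i).le.trans hHτ
    exact_mod_cast (norm_int_le_inv_pow_iff p (rq.1 i) d).1 h4
  choose r' hr' using hrd
  obtain ⟨q', hq'⟩ := hdv
  have hq'0 : 0 < q' := Nat.pos_of_mul_pos_left (hq' ▸ hq)
  have hscale : ∀ i, ‖(q' : ℚ_[p]) * x i - (r' i : ℚ_[p])‖ =
      (p : ℝ) ^ d * ‖(rq.2 : ℚ_[p]) * x i - (rq.1 i : ℚ_[p])‖ := by
    intro i
    have : (rq.2 : ℚ_[p]) * x i - (rq.1 i : ℚ_[p]) =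
        (p : ℚ_[p]) ^ d * ((q' : ℚ_[p]) * x i - (r' i : ℚ_[p])) := by
      rw [hq', hr' i]; push_cast; ring
    rw [this, norm_mul, norm_pow, Padic.norm_p, ← mul_assoc, inv_pow,
      mul_inv_cancel₀ (by positivity), one_mul]
  have hlt : ∀ i, ‖(q' : ℚ_[p]) * x i - (r' i : ℚ_[p])‖ <
      (p : ℝ) ^ d * (pairHeight rq : ℝ) ^ (-τ) := by
    intro i
    rw [hscale]
    exact mul_lt_mul_of_pos_left (happ i) (by positivity)
  have hH' : (p : ℝ) ^ d * pairHeight (r', q') ≤ pairHeight rq := by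
    exact_mod_cast mul_pairHeight_le (p ^ d) rq (r', q') hq' hr'
  have hH'pos : (0 : ℝ) < pairHeight (r', q') := by
    exact_mod_cast hq'0.trans_le (le_max_left _ _)
  have happ' : PadicApprox p n τ x (r', q') := by
    refine ⟨hq'0, fun i => (hlt i).trans_le ?_⟩
    change _ ≤ (pairHeight (r', q') : ℝ) ^ (-τ)
    have h1 : (pairHeight rq : ℝ) ^ (-τ) ≤ ((p : ℝ) ^ d * pairHeight (r', q')) ^ (-τ) :=
      Real.rpow_le_rpow_of_nonpos (by positivity) hH' (by linarith)
    have h2 : (1 : ℝ) ≤ (p : ℝ) ^ d := one_le_pow₀ hp1.le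
    calc (p : ℝ) ^ d * (pairHeight rq : ℝ) ^ (-τ)
        ≤ (p : ℝ) ^ d * ((p : ℝ) ^ d * pairHeight (r', q')) ^ (-τ) := by gcongr
      _ = ((p : ℝ) ^ d) ^ (1 - τ) * (pairHeight (r', q') : ℝ) ^ (-τ) := by
          rw [Real.mul_rpow (by positivity) (by positivity), ← mul_assoc,
            sub_eq_add_neg, Real.rpow_add (by positivity), Real.rpow_one]
      _ ≤ 1 * (pairHeight (r', q') : ℝ) ^ (-τ) := by
          gcongr
          exact Real.rpow_le_one_of_one_le_of_nonpos h2 (by linarith)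
      _ = _ := one_mul _
  have hval : padicValNat p q' ≤ K := by
    have : padicValNat p rq.2 = d + padicValNat p q' := by
      rw [hq', padicValNat.mul hpd.ne' hq'0.ne', padicValNat.prime_pow]
    omega
  obtain ⟨i, hi⟩ := hεmin (r', q') happ' hval
  have h1 : ε < (pairHeight rq : ℝ) ^ (1 - τ) := by
    refine hi.trans_lt ((hlt i).trans_le ?_)
    rw [sub_eq_add_neg, Real.rpow_add hHpos, Real.rpow_one]
    gcongr
  have h2 : (pairHeight rq : ℝ) ^ (τ - 1) ≤ 1 / ε := by
    rw [show 1 - τ = -(τ - 1) by ring, Real.rpow_neg hHpos.le] at h1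
    rw [le_div_iff₀ hε]
    have h3 : 0 < (pairHeight rq : ℝ) ^ (τ - 1) := by positivity
    calc _ ≤ (pairHeight rq : ℝ) ^ (τ - 1) * ((pairHeight rq : ℝ) ^ (τ - 1))⁻¹ := by gcongr
      _ = 1 := mul_inv_cancel₀ h3.ne'
  have h3 : (pairHeight rq : ℝ) ≤ (1 / ε) ^ (1 / (τ - 1)) := by
    have h4 := Real.rpow_le_rpow (by positivity) h2 (show 0 ≤ 1 / (τ - 1) by
      apply one_div_nonneg.2; linarith)
    rwa [← Real.rpow_mul hHpos.le, mul_one_div_cancel (by linarith), Real.rpow_one] at h4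
  exact_mod_cast h3.trans hB

/-- The set is covered by the countable set of rational points and, for each `K`, the limsup set of
the balls of radius `p ^ K H ^ (-τ)` around the rational points of height `H`. -/
theorem dimH_WStarPadic_le (p : ℕ) [Fact p.Prime] (n : ℕ) {τ : ℝ} (hτ : 1 < τ) :
    dimH (WStarPadic p n τ) ≤ ENNReal.ofReal ((n + 1) / τ) := by
  have hp1 : (1 : ℝ) < p := by exact_mod_cast (Fact.out : p.Prime).one_lt
  let rat : Set (Fin n → ℚ_[p]) :=
    ⋃ rq : (Fin n → ℤ) × ℕ, {fun i => (rq.1 i : ℚ_[p]) / (rq.2 : ℚ_[p])}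
  let U : ℕ → (Fin n → ℤ) × ℕ → Set (Fin n → ℚ_[p]) := fun K rq =>
    Metric.closedBall (fun i => (rq.1 i : ℚ_[p]) / (rq.2 : ℚ_[p]))
      ((p : ℝ) ^ K * (pairHeight rq : ℝ) ^ (-τ))
  have hsub : WStarPadic p n τ ⊆ rat ∪ ⋃ K : ℕ, {x | {rq | x ∈ U K rq}.Infinite} := by
    intro x hx
    rcases rational_or_infinite_approx p n hτ x (hx.1.mono fun rq h => h.2) with ⟨rq, hq, h⟩ | ⟨K, h⟩
    · refine Or.inl (Set.mem_iUnion.2 ⟨rq, ?_⟩)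
      have hq0 : (rq.2 : ℚ_[p]) ≠ 0 := by exact_mod_cast hq.ne'
      refine Set.mem_singleton_iff.2 (funext fun i => ?_)
      rw [eq_div_iff hq0, mul_comm]
      exact sub_eq_zero.1 (h i)
    · refine Or.inr (Set.mem_iUnion.2 ⟨K, h.mono fun rq hrq => ?_⟩)
      obtain ⟨⟨hq, happ⟩, hv⟩ := hrq
      change ∀ i, _ < (pairHeight rq : ℝ) ^ (-τ) at happ
      have hq0 : (rq.2 : ℚ_[p]) ≠ 0 := by exact_mod_cast hq.ne'
      refine Metric.mem_closedBall.2 ((dist_pi_le_iff (by positivity)).2 fun i => ?_)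
      have hn : ((p : ℝ) ^ K)⁻¹ ≤ ‖(rq.2 : ℚ_[p])‖ := by
        rw [Padic.norm_eq_zpow_neg_valuation hq0, Padic.valuation_natCast, zpow_neg, zpow_natCast]
        apply inv_anti₀ (by positivity)
        exact pow_le_pow_right₀ hp1.le hv
      rw [dist_eq_norm]
      have h1 : x i - (rq.1 i : ℚ_[p]) / (rq.2 : ℚ_[p]) =
          ((rq.2 : ℚ_[p]) * x i - (rq.1 i : ℚ_[p])) / (rq.2 : ℚ_[p]) := by field_simp
      rw [h1, norm_div, div_eq_mul_inv, mul_comm]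
      have h2 : ‖(rq.2 : ℚ_[p])‖⁻¹ ≤ (p : ℝ) ^ K := inv_le_of_inv_le₀ (by positivity) hn
      exact mul_le_mul h2 (happ i).le (norm_nonneg _) (by positivity)
  refine (dimH_mono hsub).trans ?_
  rw [dimH_union]
  refine max_le ?_ ((dimH_iUnion _).le.trans (iSup_le fun K => ?_))
  · rw [dimH_countable (Set.countable_iUnion fun _ => Set.countable_singleton _)]
    exact bot_le
  refine ENNReal.le_of_forall_pos_le_add fun ε hε _ => ?_
  let s : NNReal := ((n + 1) / τ).toNNReal + ε
  have hs0 : (n + 1) / τ < (s : ℝ) := by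
    simp only [s, NNReal.coe_add]
    have := Real.le_coe_toNNReal (((n : ℝ) + 1) / τ)
    have : (0 : ℝ) < ε := hε
    linarith
  have hspos : (0 : ℝ) < s := lt_of_le_of_lt (by positivity) hs0
  have hle : ENNReal.ofReal ((n + 1) / τ) + ε = (s : ℝ≥0∞) := by
    simp [s, ENNReal.ofReal]
  rw [hle]
  apply dimH_le_of_hausdorffMeasure_ne_top
  rw [hausdorffMeasure_limsup_eq_zero hspos (U K)
    (fun rq => ENNReal.ofReal ((p : ℝ) ^ K * (pairHeight rq : ℝ) ^ (-τ)))]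
  · exact ENNReal.zero_ne_top
  · intro rq
    refine Metric.ediam_le_of_forall_dist_le fun x hx y hy => ?_
    exact (dist_triangle_max x _ y).trans (max_le hx (by rw [dist_comm]; exact hy))
  · have hsum := (summable_pairHeight n (σ := τ * s) (by
      rw [div_lt_iff₀ (by linarith)] at hs0; linarith)).mul_left (((p : ℝ) ^ K) ^ (s : ℝ))
    have hf : ∀ rq : (Fin n → ℤ) × ℕ,
        (ENNReal.ofReal ((p : ℝ) ^ K * (pairHeight rq : ℝ) ^ (-τ))) ^ (s : ℝ) =
        ENNReal.ofReal (((p : ℝ) ^ K) ^ (s : ℝ) * (pairHeight rq : ℝ) ^ (-(τ * s))) := by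
      intro rq
      rw [ENNReal.ofReal_rpow_of_nonneg (by positivity) hspos.le,
        Real.mul_rpow (by positivity) (by positivity), ← Real.rpow_mul (by positivity), neg_mul]
    simp_rw [hf]
    exact hsum.tsum_ofReal_ne_top

/-! ### Counting residues of rational vectors of small height -/

open Classical in
/-- The residue vectors `b` modulo `p ^ m`, with representatives in `[0, p ^ m)`, that are
congruent to a rational vector `r / q` with `p ∤ q` and height at most `Q`. -/
noncomputable def goodResidues (p n Q m : ℕ) : Finset (Fin n → ℕ) :=
  (Fintype.piFinset fun _ => Finset.range (p ^ m)).filter fun b =>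
    ∃ (q : ℕ) (r : Fin n → ℤ), 0 < q ∧ ¬ p ∣ q ∧ q ≤ Q ∧ (∀ i, (r i).natAbs ≤ Q) ∧
      ∀ i, ((p ^ m : ℕ) : ℤ) ∣ q * b i - r i

/-- Dirichlet's theorem modulo `p ^ ((n + 1) t)`, by the pigeonhole principle. -/
lemma exists_dirichlet (p : ℕ) [Fact p.Prime] (n t : ℕ) (ht : 0 < t) (b : Fin n → ℕ) :
    ∃ (q : ℕ) (r : Fin n → ℤ), 0 < q ∧ q ≤ p ^ (n * t) ∧ (∀ i, (r i).natAbs ≤ p ^ (n * t)) ∧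
      ∀ i, ((p ^ ((n + 1) * t) : ℕ) : ℤ) ∣ q * b i - r i := by
  have hp := (Fact.out : p.Prime)
  obtain ⟨Q, hQ⟩ : ∃ Q, Q = p ^ (n * t) := ⟨_, rfl⟩
  obtain ⟨M, hM⟩ : ∃ M, M = p ^ ((n + 1) * t) := ⟨_, rfl⟩
  rw [← hQ, ← hM]
  have hM0 : NeZero M := ⟨by rw [hM]; exact (pow_pos hp.pos _).ne'⟩
  have hQM : Q < M := by
    rw [hQ, hM]
    exact Nat.pow_lt_pow_right hp.one_lt (by nlinarith)
  let f : (Fin (n + 1) → Fin (Q + 1)) → (Fin n → ZMod M) := fun v i =>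
    (((v 0 : ℕ) : ℤ) * b i - ((v i.succ : ℕ) : ℤ) : ℤ)
  have hcard : Fintype.card (Fin n → ZMod M) < Fintype.card (Fin (n + 1) → Fin (Q + 1)) := by
    simp only [Fintype.card_fun, ZMod.card, Fintype.card_fin]
    calc M ^ n = Q ^ (n + 1) := by rw [hM, hQ, ← pow_mul, ← pow_mul]; congr 1; ring
      _ < (Q + 1) ^ (n + 1) := Nat.pow_lt_pow_left (by omega) (by omega)
  obtain ⟨v, w, hvw, hf⟩ := Fintype.exists_ne_map_eq_of_card_lt f hcard
  wlog hle : (w 0 : ℕ) ≤ v 0 generalizing v w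
  · exact this w v hvw.symm hf.symm (by omega)
  have hdvd : ∀ i, (M : ℤ) ∣ (((v 0 : ℕ) : ℤ) - (w 0 : ℕ)) * b i -
      (((v i.succ : ℕ) : ℤ) - (w i.succ : ℕ)) := by
    intro i
    have h1 := (ZMod.intCast_eq_intCast_iff_dvd_sub _ _ _).1 (congrFun hf i).symm
    convert h1 using 1
    ring
  refine ⟨(v 0 : ℕ) - w 0, fun i => ((v i.succ : ℕ) : ℤ) - (w i.succ : ℕ), ?_, ?_, ?_, ?_⟩
  · by_contra h0
    have h00 : (v 0 : ℕ) = w 0 := by omega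
    apply hvw
    funext j
    refine Fin.cases (Fin.ext h00) (fun i => ?_) j
    have h1 := hdvd i
    rw [h00, sub_self, zero_mul, zero_sub, dvd_neg] at h1
    have h2 := (v i.succ).2
    have h3 := (w i.succ).2
    have h4 := Int.eq_zero_of_abs_lt_dvd h1 (by rw [abs_lt]; constructor <;> omega)
    exact Fin.ext (by omega)
  · have := (v 0).2
    omega
  · intro i
    have h2 := (v i.succ).2
    have h3 := (w i.succ).2
    simp only
    omega
  · intro i
    have := hdvd i
    rwa [Nat.cast_sub hle]

/-- Dirichlet's theorem after cancelling the largest power `p ^ k` dividing the denominator. -/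
lemma exists_dirichlet_coprime (p : ℕ) [Fact p.Prime] (n t : ℕ) (ht : 0 < t) (b : Fin n → ℕ) :
    ∃ (k q : ℕ) (r : Fin n → ℤ), k ≤ n * t ∧ 0 < q ∧ ¬ p ∣ q ∧ q ≤ p ^ (n * t - k) ∧
      (∀ i, (r i).natAbs ≤ p ^ (n * t - k)) ∧
      ∀ i, ((p ^ ((n + 1) * t - k) : ℕ) : ℤ) ∣ q * b i - r i := by
  have hp := (Fact.out : p.Prime)
  obtain ⟨q, r, hq0, hqQ, hrQ, hdvd⟩ := exists_dirichlet p n t ht b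
  obtain ⟨k, q', hpq', hq'⟩ := Nat.exists_eq_pow_mul_and_not_dvd hq0.ne' p hp.ne_one
  have hpk : 0 < p ^ k := pow_pos hp.pos k
  have hq'0 : 0 < q' := Nat.pos_of_ne_zero (by rintro rfl; simp at hpq')
  have hk : k ≤ n * t := by
    rw [← Nat.pow_le_pow_iff_right hp.one_lt]
    exact (Nat.le_of_dvd hq0 (hq' ▸ dvd_mul_right _ _)).trans hqQ
  have hsplit : p ^ (n * t) = p ^ k * p ^ (n * t - k) := by rw [← pow_add]; congr 1; omega
  have hsplit' : p ^ ((n + 1) * t) = p ^ k * p ^ ((n + 1) * t - k) := by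
    rw [← pow_add]; congr 1
    have : (n + 1) * t = n * t + t := by ring
    omega
  have hr : ∀ i, ((p ^ k : ℕ) : ℤ) ∣ r i := by
    intro i
    have h1 : ((p ^ k : ℕ) : ℤ) ∣ q * b i - r i :=
      (Int.natCast_dvd_natCast.2 (hsplit' ▸ dvd_mul_right _ _)).trans (hdvd i)
    have h2 : ((p ^ k : ℕ) : ℤ) ∣ q * b i :=
      (Int.natCast_dvd_natCast.2 (hq' ▸ dvd_mul_right _ _)).mul_right _
    exact (dvd_sub_right h2).1 h1
  choose r' hr' using hr
  refine ⟨k, q', r', hk, hq'0, hpq', ?_, fun i => ?_, fun i => ?_⟩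
  · rw [hsplit, hq'] at hqQ
    exact Nat.le_of_mul_le_mul_left hqQ hpk
  · have h1 := hrQ i
    rw [hsplit, hr', Int.natAbs_mul, Int.natAbs_natCast] at h1
    exact Nat.le_of_mul_le_mul_left h1 hpk
  · have h1 := hdvd i
    rw [hr', hq', hsplit'] at h1
    have h2 : ((p ^ k * q' : ℕ) : ℤ) * b i - ((p ^ k : ℕ) : ℤ) * r' i =
        ((p ^ k : ℕ) : ℤ) * (q' * b i - r' i) := by push_cast; ring
    rw [h2, Nat.cast_mul] at h1
    exact Int.dvd_of_mul_dvd_mul_left (by exact_mod_cast hpk.ne') h1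

lemma dvd_sub_of_dvd_mul_sub (p : ℕ) [Fact p.Prime] {M q : ℕ} (hq : ¬ p ∣ q) {a b r : ℤ}
    (ha : ((p ^ M : ℕ) : ℤ) ∣ q * a - r) (hb : ((p ^ M : ℕ) : ℤ) ∣ q * b - r) :
    ((p ^ M : ℕ) : ℤ) ∣ a - b := by
  have h1 : ((p ^ M : ℕ) : ℤ) ∣ q * (a - b) := by
    rw [show (q : ℤ) * (a - b) = (q * a - r) - (q * b - r) by ring]
    exact dvd_sub ha hb
  refine IsCoprime.dvd_of_dvd_mul_left ?_ h1
  rw [Nat.isCoprime_iff_coprime]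
  exact Nat.Coprime.pow_left _ (((Fact.out : p.Prime).coprime_iff_not_dvd).2 hq)

/-- An interval of length `p ^ N` contains at most `p ^ (N - M)` integers of which any two are
congruent modulo `p ^ M`. -/
lemma card_le_of_congr (p : ℕ) [Fact p.Prime] {M N : ℕ} (h : M ≤ N) (S : Finset ℕ)
    (hS : S ⊆ Finset.range (p ^ N))
    (hc : ∀ a ∈ S, ∀ b ∈ S, ((p ^ M : ℕ) : ℤ) ∣ (a : ℤ) - b) : S.card ≤ p ^ (N - M) := by
  have hp := (Fact.out : p.Prime)
  rw [← Finset.card_range (p ^ (N - M))]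
  refine Finset.card_le_card_of_injOn (fun b => b / p ^ M) ?_ ?_
  · intro b hb
    have := Finset.mem_range.1 (hS hb)
    refine Finset.mem_coe.2 (Finset.mem_range.2 (Nat.div_lt_of_lt_mul ?_))
    rwa [← pow_add, Nat.add_sub_cancel' h]
  · intro a ha b hb hab
    have h1 : b ≡ a [MOD p ^ M] := (Nat.modEq_iff_dvd).2 (hc a ha b hb)
    have h2 : b % p ^ M = a % p ^ M := h1
    simp only at hab
    rw [← Nat.div_add_mod a (p ^ M), ← Nat.div_add_mod b (p ^ M), hab, h2]

/-- The vector version of `card_le_of_congr`. -/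
lemma card_pi_le_of_congr (p : ℕ) [Fact p.Prime] {n M N : ℕ} (h : M ≤ N)
    (S : Finset (Fin n → ℕ)) (hS : S ⊆ Fintype.piFinset fun _ => Finset.range (p ^ N))
    (hc : ∀ a ∈ S, ∀ b ∈ S, ∀ i, ((p ^ M : ℕ) : ℤ) ∣ (a i : ℤ) - b i) :
    S.card ≤ p ^ (n * (N - M)) := by
  classical
  have hsub : S ⊆ Fintype.piFinset fun i => S.image fun b => b i := by
    intro b hb
    exact Fintype.mem_piFinset.2 fun i => Finset.mem_image_of_mem (fun b => b i) hb
  refine (Finset.card_le_card hsub).trans ?_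
  rw [Fintype.card_piFinset]
  calc ∏ i, (S.image fun b => b i).card ≤ ∏ _i : Fin n, p ^ (N - M) := by
        refine Finset.prod_le_prod' fun i _ => card_le_of_congr p h _ ?_ ?_
        · intro a ha
          obtain ⟨b, hb, rfl⟩ := Finset.mem_image.1 ha
          exact Fintype.mem_piFinset.1 (hS hb) i
        · intro a ha a' ha'
          obtain ⟨b, hb, rfl⟩ := Finset.mem_image.1 ha
          obtain ⟨b', hb', rfl⟩ := Finset.mem_image.1 ha'
          exact hc b hb b' hb' i
    _ = p ^ (n * (N - M)) := by
        rw [Finset.prod_const, Finset.card_univ, Fintype.card_fin, ← pow_mul, mul_comm]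

lemma sum_Ioc_pow_le {x : ℝ} (h0 : 0 ≤ x) (h : x ≤ 1 / 2) (a b : ℕ) :
    ∑ k ∈ Finset.Ioc a b, x ^ k ≤ x ^ a := by
  rcases le_or_gt b a with hab | hab
  · rw [Finset.Ioc_eq_empty (by omega)]; simpa using pow_nonneg h0 a
  have : ∑ k ∈ Finset.Ioc a b, x ^ k ≤ x ^ a - x ^ b := by
    induction b, hab.le using Nat.le_induction with
    | base => simp
    | succ b hb ih =>
      rcases hb.eq_or_lt with rfl | hlt
      · simp only [Nat.Ioc_succ_singleton, Finset.sum_singleton, pow_succ]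
        nlinarith [pow_nonneg h0 a]
      rw [← Finset.insert_Ioc_right_eq_Ioc_add_one hb, Finset.sum_insert (by simp)]
      have := ih hlt
      rw [pow_succ]
      nlinarith [pow_nonneg h0 b]
  linarith [pow_nonneg h0 b]

/-- At least half of all residue vectors modulo `p ^ ((n + 1) t - k₀)` are good for the height
`p ^ (n t)`. For each residue vector, Dirichlet's theorem yields an approximation; it only fails
to show goodness if more than `k₀` factors `p` had to be cancelled, and the vectors with
such an approximation are few, since there are few rational vectors of so small a height. -/
lemma card_goodResidues (p : ℕ) [Fact p.Prime] (n t k₀ : ℕ) (ht : 0 < t)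
    (hk₀ : 2 * 3 ^ n ≤ p ^ k₀) (hkt : k₀ ≤ (n + 1) * t) :
    p ^ (n * ((n + 1) * t - k₀)) ≤
      2 * (goodResidues p n (p ^ (n * t)) ((n + 1) * t - k₀)).card := by
  classical
  have hp := (Fact.out : p.Prime)
  obtain ⟨m, hm⟩ : ∃ m, m = (n + 1) * t - k₀ := ⟨_, rfl⟩
  rw [← hm]
  -- `box k` holds the candidates for `(q, r)` after cancelling `p ^ k`, and `cls k (q, r)` the
  -- residue vectors which `r / q` then approximates
  let box : ℕ → Finset (ℕ × (Fin n → ℤ)) := fun k =>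
    (Finset.Ioc 0 (p ^ (n * t - k))) ×ˢ
      Fintype.piFinset fun _ => Finset.Icc (-((p ^ (n * t - k) : ℕ) : ℤ)) (p ^ (n * t - k) : ℕ)
  let cls : ℕ → ℕ × (Fin n → ℤ) → Finset (Fin n → ℕ) := fun k qr =>
    (Fintype.piFinset fun _ => Finset.range (p ^ m)).filter fun b =>
      ¬ p ∣ qr.1 ∧ ∀ i, ((p ^ ((n + 1) * t - k) : ℕ) : ℤ) ∣ qr.1 * b i - qr.2 i
  have hcover : (Fintype.piFinset fun _ : Fin n => Finset.range (p ^ m)) ⊆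
      goodResidues p n (p ^ (n * t)) m ∪
        (Finset.Ioc k₀ (n * t)).biUnion fun k => (box k).biUnion fun qr => cls k qr := by
    intro b hb
    obtain ⟨k, q, r, hk, hq0, hpq, hqQ, hrQ, hdvd⟩ := exists_dirichlet_coprime p n t ht b
    rcases le_or_gt k k₀ with hkk | hkk
    · refine Finset.mem_union_left _ (Finset.mem_filter.2 ⟨hb, q, r, hq0, hpq, ?_, fun i => ?_,
        fun i => ?_⟩)
      · exact hqQ.trans (Nat.pow_le_pow_right hp.pos (by omega))
      · exact (hrQ i).trans (Nat.pow_le_pow_right hp.pos (by omega))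
      · exact (Int.natCast_dvd_natCast.2 (pow_dvd_pow p (by omega))).trans (hdvd i)
    · refine Finset.mem_union_right _ (Finset.mem_biUnion.2 ⟨k, Finset.mem_Ioc.2 ⟨hkk, hk⟩,
        Finset.mem_biUnion.2 ⟨(q, r), ?_, Finset.mem_filter.2 ⟨hb, hpq, hdvd⟩⟩⟩)
      refine Finset.mem_product.2 ⟨Finset.mem_Ioc.2 ⟨hq0, hqQ⟩, Fintype.mem_piFinset.2 fun i => ?_⟩
      have := hrQ i
      rw [Finset.mem_Icc]
      dsimp only
      omega
  have hcls : ∀ k ∈ Finset.Ioc k₀ (n * t), ∀ qr, (cls k qr).card ≤ p ^ (n * (k - k₀)) := by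
    intro k hk qr
    obtain ⟨hk1, hk2⟩ := Finset.mem_Ioc.1 hk
    have hnt : (n + 1) * t = n * t + t := by ring
    have := card_pi_le_of_congr p (M := (n + 1) * t - k) (N := m) (by omega) (cls k qr)
      (Finset.filter_subset _ _) (fun a ha b hb i => by
        have h1 := (Finset.mem_filter.1 ha).2
        have h2 := (Finset.mem_filter.1 hb).2
        exact dvd_sub_of_dvd_mul_sub p h1.1 (h1.2 i) (h2.2 i))
    rwa [show m - ((n + 1) * t - k) = k - k₀ by omega] at this
  have hbox : ∀ k, (box k).card ≤ 3 ^ n * p ^ ((n * t - k) * (n + 1)) := by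
    intro k
    have hpos : 0 < p ^ (n * t - k) := pow_pos hp.pos _
    simp only [box, Finset.card_product, Nat.card_Ioc, Fintype.card_piFinset, Int.card_Icc,
      Finset.prod_const, Finset.card_univ, Fintype.card_fin]
    rw [pow_mul]
    generalize p ^ (n * t - k) = A at hpos
    have h1 : ((A : ℤ) + 1 - -(A : ℤ)).toNat ≤ 3 * A := by omega
    calc (A - 0) * ((A : ℤ) + 1 - -(A : ℤ)).toNat ^ n ≤ A * (3 * A) ^ n := by
          gcongr; omega
      _ = 3 ^ n * A ^ (n + 1) := by rw [mul_pow, pow_succ]; ring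
  have hp0 : (0 : ℝ) < p := by exact_mod_cast hp.pos
  have hp2 : (2 : ℝ) ≤ p := by exact_mod_cast hp.two_le
  have hbad : ∀ k ∈ Finset.Ioc k₀ (n * t),
      ((((box k).biUnion fun qr => cls k qr).card : ℕ) : ℝ) ≤
        3 ^ n * (p : ℝ) ^ (n * m) * ((p : ℝ)⁻¹) ^ k := by
    intro k hk
    obtain ⟨hk1, hk2⟩ := Finset.mem_Ioc.1 hk
    have h1 : ((box k).biUnion fun qr => cls k qr).card ≤
        3 ^ n * p ^ ((n * t - k) * (n + 1)) * p ^ (n * (k - k₀)) :=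
      (Finset.card_biUnion_le_card_mul _ _ _ fun qr _ => hcls k hk qr).trans
        (Nat.mul_le_mul_right _ (hbox k))
    have h2 : (n * t - k) * (n + 1) + n * (k - k₀) + k = n * m := by
      obtain ⟨u, hu⟩ := Nat.exists_eq_add_of_le hk2
      obtain ⟨v, hv⟩ := Nat.exists_eq_add_of_le hk1.le
      obtain ⟨w, hw⟩ := Nat.exists_eq_add_of_le hkt
      have h3 : n * t - k = u := by omega
      have h4 : k - k₀ = v := by omega
      have h5 : m = w := by omega
      rw [h3, h4, h5]
      have h6 : n * ((n + 1) * t) = n * k₀ + n * w := by rw [hw]; ring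
      have h7 : n * ((n + 1) * t) = (n + 1) * (n * t) := by ring
      rw [hu] at h7
      have h8 : (n + 1) * (k + u) = n * k + k + u * (n + 1) := by ring
      have h9 : n * k = n * k₀ + n * v := by rw [hv]; ring
      omega
    rw [inv_pow, ← div_eq_mul_inv, le_div_iff₀ (by positivity), ← h2, pow_add, pow_add]
    calc ((((box k).biUnion fun qr => cls k qr).card : ℕ) : ℝ) * (p : ℝ) ^ k
        ≤ ((3 ^ n * p ^ ((n * t - k) * (n + 1)) * p ^ (n * (k - k₀)) : ℕ) : ℝ) * (p : ℝ) ^ k := by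
          gcongr
      _ = _ := by push_cast; ring
  have htotal : ((p : ℝ) ^ (n * m)) ≤ (goodResidues p n (p ^ (n * t)) m).card +
      ∑ k ∈ Finset.Ioc k₀ (n * t), 3 ^ n * (p : ℝ) ^ (n * m) * ((p : ℝ)⁻¹) ^ k := by
    have h1 := (Finset.card_le_card hcover).trans (Finset.card_union_le _ _)
    have h2 : (Fintype.piFinset fun _ : Fin n => Finset.range (p ^ m)).card = p ^ (n * m) := by
      rw [Fintype.card_piFinset]
      simp [← pow_mul, mul_comm]
    rw [h2] at h1
    have h3 := h1.trans (Nat.add_le_add_left Finset.card_biUnion_le _)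
    have h4 : ((p : ℝ) ^ (n * m)) ≤ (goodResidues p n (p ^ (n * t)) m).card +
      ∑ k ∈ Finset.Ioc k₀ (n * t), ((((box k).biUnion fun qr => cls k qr).card : ℕ) : ℝ) := by
      exact_mod_cast h3
    exact h4.trans (add_le_add_right (Finset.sum_le_sum hbad) _)
  have hsum : ∑ k ∈ Finset.Ioc k₀ (n * t), 3 ^ n * (p : ℝ) ^ (n * m) * ((p : ℝ)⁻¹) ^ k ≤
      (p : ℝ) ^ (n * m) / 2 := by
    rw [← Finset.mul_sum]
    have h1 := sum_Ioc_pow_le (x := (p : ℝ)⁻¹) (by positivity)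
      (by rw [one_div]; exact inv_anti₀ (by norm_num) hp2) k₀ (n * t)
    have h2 : (2 : ℝ) * 3 ^ n ≤ (p : ℝ) ^ k₀ := by exact_mod_cast hk₀
    calc _ ≤ 3 ^ n * (p : ℝ) ^ (n * m) * ((p : ℝ)⁻¹) ^ k₀ := by gcongr
      _ ≤ _ := by
        rw [inv_pow, ← div_eq_mul_inv, div_le_iff₀ (by positivity)]
        have h3 : (0 : ℝ) < (p : ℝ) ^ (n * m) := by positivity
        nlinarith
  have hfinal : ((p : ℝ) ^ (n * m)) ≤ 2 * (goodResidues p n (p ^ (n * t)) m).card := by linarith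
  exact_mod_cast hfinal

/-! ### The Cantor measure of balls -/

/-- Two points of the Cantor set whose digits agree below `j` have congruent `j`-th digits if they
are close to each other. -/
lemma cantor_digit_congr (p : ℕ) [Fact p.Prime] {n : ℕ} (R : ℕ → Finset (Fin n → ℕ))
    (m l : ℕ → ℕ) (x₀ : Fin n → ℚ_[p]) (z : ∀ j, R j → Fin n → ℚ_[p])
    (hz : ∀ j b i, ‖z j b i - ((b.1 i : ℕ) : ℚ_[p])‖ ≤ ((p : ℝ) ^ m j)⁻¹)
    (g : (∀ j, R j) → Fin n → ℚ_[p])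
    (hg : ∀ ω j, ‖g ω - (x₀ + ∑ i ∈ Finset.range j, (p : ℚ_[p]) ^ l i • z i (ω i))‖ ≤
      ((p : ℝ) ^ l j)⁻¹)
    (ω ω' : ∀ j, R j) (j k : ℕ) (hjk : l j ≤ k) (hkj : k ≤ l (j + 1))
    (hagree : ∀ i < j, ω i = ω' i) (hd : ‖g ω - g ω'‖ ≤ ((p : ℝ) ^ k)⁻¹) (i : Fin n) :
    ((p ^ min (k - l j) (m j) : ℕ) : ℤ) ∣ ((ω j).1 i : ℤ) - ((ω' j).1 i : ℤ) := by
  have hp1 : (1 : ℝ) < p := by exact_mod_cast (Fact.out : p.Prime).one_lt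
  have hp0 : (0 : ℝ) < p := by linarith
  have hanti : ∀ {a b : ℕ}, a ≤ b → ((p : ℝ) ^ b)⁻¹ ≤ ((p : ℝ) ^ a)⁻¹ := fun h =>
    inv_anti₀ (by positivity) (pow_le_pow_right₀ hp1.le h)
  have h1 : ‖(p : ℚ_[p]) ^ l j • (z j (ω j) i - z j (ω' j) i)‖ ≤ ((p : ℝ) ^ k)⁻¹ := by
    have hsum : ∑ i ∈ Finset.range j, (p : ℚ_[p]) ^ l i • z i (ω i) =
        ∑ i ∈ Finset.range j, (p : ℚ_[p]) ^ l i • z i (ω' i) :=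
      Finset.sum_congr rfl fun i hi => by rw [hagree i (Finset.mem_range.1 hi)]
    have ha := (norm_le_pi_norm _ i).trans ((hg ω (j + 1)).trans (hanti hkj))
    have hb := (norm_le_pi_norm _ i).trans ((hg ω' (j + 1)).trans (hanti hkj))
    have hc := (norm_le_pi_norm _ i).trans hd
    rw [Finset.sum_range_succ] at ha hb
    rw [hsum] at ha
    generalize ∑ i ∈ Finset.range j, (p : ℚ_[p]) ^ l i • z i (ω' i) = S at ha hb
    simp only [Pi.sub_apply, Pi.add_apply, Pi.smul_apply] at ha hb hc
    have heq : (p : ℚ_[p]) ^ l j • (z j (ω j) i - z j (ω' j) i) =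
        -(g ω i - (x₀ i + (S i + (p : ℚ_[p]) ^ l j • z j (ω j) i))) +
        ((g ω i - g ω' i) + (g ω' i - (x₀ i + (S i + (p : ℚ_[p]) ^ l j • z j (ω' j) i)))) := by
      simp only [smul_eq_mul]; ring
    rw [heq]
    refine (Padic.nonarchimedean _ _).trans (max_le (by rwa [norm_neg]) ?_)
    exact (Padic.nonarchimedean _ _).trans (max_le hc hb)
  have h2 : ‖z j (ω j) i - z j (ω' j) i‖ ≤ ((p : ℝ) ^ (k - l j))⁻¹ := by
    rw [norm_smul, norm_pow, Padic.norm_p, inv_pow] at h1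
    have h3 : (p : ℝ) ^ k = (p : ℝ) ^ l j * (p : ℝ) ^ (k - l j) := by
      rw [← pow_add]; congr 1; omega
    rw [h3, mul_inv] at h1
    exact le_of_mul_le_mul_left h1 (by positivity)
  rw [← norm_int_le_inv_pow_iff p]
  have heq : ((((ω j).1 i : ℤ) - ((ω' j).1 i : ℤ) : ℤ) : ℚ_[p]) =
      -(z j (ω j) i - (((ω j).1 i : ℕ) : ℚ_[p])) +
        ((z j (ω j) i - z j (ω' j) i) + (z j (ω' j) i - (((ω' j).1 i : ℕ) : ℚ_[p]))) := by
    push_cast; ring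
  rw [heq]
  refine (Padic.nonarchimedean _ _).trans (max_le ?_ ?_)
  · rw [norm_neg]
    exact (hz j _ i).trans (hanti (min_le_right _ _))
  · refine (Padic.nonarchimedean _ _).trans (max_le (h2.trans (hanti (min_le_left _ _))) ?_)
    exact (hz j _ i).trans (hanti (min_le_right _ _))

/-- Two points of the Cantor set at distance at most `p ^ (- l j)` have the same digits below `j`:
by induction these digits are congruent modulo `p ^ (m i)`, and they are reduced residues. -/
lemma cantor_prefix_eq (p : ℕ) [Fact p.Prime] {n : ℕ} (R : ℕ → Finset (Fin n → ℕ))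
    (m l : ℕ → ℕ) (x₀ : Fin n → ℚ_[p]) (z : ∀ j, R j → Fin n → ℚ_[p])
    (hR : ∀ j, R j ⊆ Fintype.piFinset fun _ => Finset.range (p ^ m j))
    (hz : ∀ j b i, ‖z j b i - ((b.1 i : ℕ) : ℚ_[p])‖ ≤ ((p : ℝ) ^ m j)⁻¹)
    (hl : ∀ j, l j + m j ≤ l (j + 1))
    (g : (∀ j, R j) → Fin n → ℚ_[p])
    (hg : ∀ ω j, ‖g ω - (x₀ + ∑ i ∈ Finset.range j, (p : ℚ_[p]) ^ l i • z i (ω i))‖ ≤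
      ((p : ℝ) ^ l j)⁻¹)
    (ω ω' : ∀ j, R j) (j k : ℕ) (hjk : l j ≤ k) (hd : ‖g ω - g ω'‖ ≤ ((p : ℝ) ^ k)⁻¹) :
    ∀ i < j, ω i = ω' i := by
  have hp1 : (1 : ℝ) < p := by exact_mod_cast (Fact.out : p.Prime).one_lt
  have hmono : Monotone l := monotone_nat_of_le_succ fun j => by have := hl j; omega
  intro i
  induction i using Nat.strong_induction_on with
  | _ i ih =>
    intro hij
    have hli : l (i + 1) ≤ l j := hmono hij
    have h1 : ((p : ℝ) ^ k)⁻¹ ≤ ((p : ℝ) ^ l (i + 1))⁻¹ :=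
      inv_anti₀ (by positivity) (pow_le_pow_right₀ hp1.le (by omega))
    refine Subtype.ext (funext fun a => ?_)
    have h2 := cantor_digit_congr p R m l x₀ z hz g hg ω ω' i (l (i + 1)) (hmono (by omega)) le_rfl
      (fun i' hi' => ih i' hi' (by omega)) (hd.trans h1) a
    have h3 := hl i
    rw [min_eq_right (by omega)] at h2
    have hb := Finset.mem_range.1 (Fintype.mem_piFinset.1 (hR i (ω i).2) a)
    have hb' := Finset.mem_range.1 (Fintype.mem_piFinset.1 (hR i (ω' i).2) a)
    have h4 := Int.eq_zero_of_abs_lt_dvd h2 (by rw [abs_lt]; constructor <;> omega)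
    omega

/-- Digit sets carry the discrete σ-algebra. -/
instance instMeasurableSpaceSubtypeDigits {n : ℕ} (S : Finset (Fin n → ℕ)) : MeasurableSpace S := ⊤

/-- The uniform probability measure on the sequences of digits, the `j`-th of them in `R j`. -/
noncomputable def digitMeasure {n : ℕ} (R : ℕ → Finset (Fin n → ℕ)) (hne : ∀ j, Nonempty (R j)) :
    Measure (∀ j, R j) :=
  Measure.infinitePi fun j => (PMF.uniformOfFintype (R j)).toMeasure

instance {n : ℕ} (R : ℕ → Finset (Fin n → ℕ)) (hne : ∀ j, Nonempty (R j)) :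
    IsProbabilityMeasure (digitMeasure R hne) := by
  unfold digitMeasure
  infer_instance

lemma uniform_le {n : ℕ} (S : Finset (Fin n → ℕ)) [Nonempty S] (t : Set S) (N : ℕ)
    (ht : t.ncard ≤ N) :
    (PMF.uniformOfFintype S).toMeasure t ≤ ENNReal.ofReal (N / S.card) := by
  classical
  have hS : (0 : ℝ) < S.card := by
    have h : 0 < Fintype.card S := Fintype.card_pos
    rw [Fintype.card_coe] at h
    exact_mod_cast h
  rw [PMF.toMeasure_uniformOfFintype_apply _ (MeasurableSpace.measurableSet_top),
    ENNReal.ofReal_div_of_pos hS, ENNReal.ofReal_natCast, ENNReal.ofReal_natCast, Fintype.card_coe]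
  gcongr
  rwa [← Nat.card_eq_fintype_card, Nat.card_coe_set_eq]

/-- A ball of radius `p ^ (-k)` has mass at most `2 p ^ (-k s)`, for the image of the digit measure
under the parametrization `g` of the Cantor set. If `l j ≤ k < l (j + 1)`, the ball fixes the first
`j` digits and determines the digit of index `j` modulo `p ^ min (k - l j) (m j)`. -/
lemma digitMeasure_ball_le (p : ℕ) [Fact p.Prime] {n : ℕ} (R : ℕ → Finset (Fin n → ℕ))
    (hne : ∀ j, Nonempty (R j))
    (m l : ℕ → ℕ) (x₀ : Fin n → ℚ_[p]) (z : ∀ j, R j → Fin n → ℚ_[p])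
    (hR : ∀ j, R j ⊆ Fintype.piFinset fun _ => Finset.range (p ^ m j))
    (hcard : ∀ j, p ^ (n * m j) ≤ 2 * (R j).card)
    (hz : ∀ j b i, ‖z j b i - ((b.1 i : ℕ) : ℚ_[p])‖ ≤ ((p : ℝ) ^ m j)⁻¹)
    (hl0 : l 0 = 0) (hm : ∀ j, 0 < m j) (hl : ∀ j, l j + m j ≤ l (j + 1))
    {s : ℝ} (hs0 : 0 ≤ s) (hsn : s ≤ n)
    (hmass : ∀ j, ((p : ℝ) ^ l j) ^ s ≤ ∏ i ∈ Finset.range j, ((R i).card : ℝ))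
    (g : (∀ j, R j) → Fin n → ℚ_[p])
    (hg : ∀ ω j, ‖g ω - (x₀ + ∑ i ∈ Finset.range j, (p : ℚ_[p]) ^ l i • z i (ω i))‖ ≤
      ((p : ℝ) ^ l j)⁻¹) (x : Fin n → ℚ_[p]) (k : ℕ) :
    digitMeasure R hne (g ⁻¹' Metric.closedBall x ((p : ℝ) ^ k)⁻¹) ≤
      ENNReal.ofReal (2 * (((p : ℝ) ^ k)⁻¹) ^ s) := by
  have hp1 : (1 : ℝ) < p := by exact_mod_cast (Fact.out : p.Prime).one_lt
  have hp0 : (0 : ℝ) < p := by linarith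
  have hmono : StrictMono l := strictMono_nat_of_lt_succ fun j => by
    have := hl j; have := hm j; omega
  obtain ⟨j, hjk, hkj⟩ : ∃ j, l j ≤ k ∧ k < l (j + 1) := by
    have hex : ∃ j, k < l (j + 1) := ⟨k, by have := hmono.id_le (k + 1); simp at this; omega⟩
    refine ⟨Nat.find hex, ?_, Nat.find_spec hex⟩
    rcases Nat.eq_zero_or_pos (Nat.find hex) with h0 | h0
    · rw [h0, hl0]; exact Nat.zero_le _
    · have := Nat.find_min hex (m := Nat.find hex - 1) (by omega)
      rw [Nat.sub_add_cancel h0] at this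
      omega
  let A := g ⁻¹' Metric.closedBall x ((p : ℝ) ^ k)⁻¹
  have hA : ∀ ω ∈ A, ∀ ω' ∈ A, ‖g ω - g ω'‖ ≤ ((p : ℝ) ^ k)⁻¹ := by
    intro ω h ω' h'
    rw [← dist_eq_norm]
    exact (dist_triangle_max _ x _).trans (max_le h (by rw [dist_comm]; exact h'))
  let t : ∀ i, Set (R i) := fun i => {b | ∃ ω ∈ A, ω i = b}
  have hAt : A ⊆ Set.pi (Finset.range (j + 1) : Finset ℕ) t := fun ω hω i _ => ⟨ω, hω, rfl⟩
  have ht : ∀ i < j, (t i).ncard ≤ 1 := by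
    intro i hi
    rw [Set.ncard_le_one]
    rintro a ⟨ω, hω, rfl⟩ b ⟨ω', hω', rfl⟩
    exact cantor_prefix_eq p R m l x₀ z hR hz hl g hg ω ω' j k hjk (hA ω hω ω' hω') i hi
  have htj : (t j).ncard ≤ p ^ (n * (m j - min (k - l j) (m j))) := by
    classical
    have h1 := card_pi_le_of_congr p (min_le_right (k - l j) (m j))
      ((t j).toFinite.toFinset.image Subtype.val) ?_ ?_
    · rwa [Finset.card_image_of_injective _ Subtype.val_injective,
        ← Set.ncard_eq_toFinset_card] at h1
    · intro b hb
      obtain ⟨b, -, rfl⟩ := Finset.mem_image.1 hb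
      exact hR j b.2
    · intro a ha b hb i
      obtain ⟨a', ha', rfl⟩ := Finset.mem_image.1 ha
      obtain ⟨b', hb', rfl⟩ := Finset.mem_image.1 hb
      obtain ⟨ω, hω, rfl⟩ := (Set.Finite.mem_toFinset _).1 ha'
      obtain ⟨ω', hω', rfl⟩ := (Set.Finite.mem_toFinset _).1 hb'
      exact cantor_digit_congr p R m l x₀ z hz g hg ω ω' j k hjk hkj.le
        (cantor_prefix_eq p R m l x₀ z hR hz hl g hg ω ω' j k hjk (hA ω hω ω' hω'))
        (hA ω hω ω' hω') i
  have hRpos : ∀ i, (0 : ℝ) < (R i).card := by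
    intro i
    exact_mod_cast Finset.card_pos.2 (Finset.nonempty_coe_sort.1 (hne i))
  have hprodpos : (0 : ℝ) < ∏ i ∈ Finset.range j, ((R i).card : ℝ) :=
    Finset.prod_pos fun i _ => hRpos i
  set N := p ^ (n * (m j - min (k - l j) (m j))) with hN
  calc digitMeasure R hne A
      ≤ digitMeasure R hne (Set.pi (Finset.range (j + 1) : Finset ℕ) t) := measure_mono hAt
    _ = ∏ i ∈ Finset.range (j + 1), (PMF.uniformOfFintype (R i)).toMeasure (t i) :=
        Measure.infinitePi_pi _ fun i _ => MeasurableSpace.measurableSet_top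
    _ ≤ (∏ i ∈ Finset.range j, ENNReal.ofReal ((1 : ℕ) / (R i).card)) *
          ENNReal.ofReal (N / (R j).card) := by
        rw [Finset.prod_range_succ]
        refine mul_le_mul' (Finset.prod_le_prod' fun i hi => ?_) (uniform_le _ _ _ htj)
        exact uniform_le _ _ _ (ht i (Finset.mem_range.1 hi))
    _ = ENNReal.ofReal ((∏ i ∈ Finset.range j, ((R i).card : ℝ))⁻¹ * (N / (R j).card)) := by
        rw [← ENNReal.ofReal_prod_of_nonneg (fun i _ => by positivity),
          ← ENNReal.ofReal_mul (Finset.prod_nonneg fun i _ => by positivity)]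
        simp [Finset.prod_inv_distrib]
    _ ≤ _ := ENNReal.ofReal_le_ofReal ?_
  rw [Real.inv_rpow (by positivity)]
  rcases le_or_gt (k - l j) (m j) with hcase | hcase
  · -- scales between that of the parent cell and the separation of its children
    rw [min_eq_left hcase] at hN
    obtain ⟨d, hd⟩ := Nat.exists_eq_add_of_le hjk
    have hdk : k - l j = d := by omega
    rw [hdk] at hN hcase
    have h1 : (N : ℝ) * (p : ℝ) ^ (n * d) = (p : ℝ) ^ (n * m j) := by
      rw [hN]; push_cast; rw [← pow_add, ← mul_add]; congr 2; omega
    have h2 : (p : ℝ) ^ (n * m j) ≤ 2 * (R j).card := by exact_mod_cast hcard j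
    have h3 : ((p : ℝ) ^ d) ^ s ≤ (p : ℝ) ^ (n * d) := by
      rw [mul_comm, pow_mul, ← Real.rpow_natCast ((p : ℝ) ^ d) n]
      exact Real.rpow_le_rpow_of_exponent_le (one_le_pow₀ hp1.le) hsn
    have h4 : (N : ℝ) / (R j).card ≤ 2 * (((p : ℝ) ^ d) ^ s)⁻¹ := by
      rw [← div_eq_mul_inv, div_le_div_iff₀ (hRpos j) (by positivity)]
      calc (N : ℝ) * ((p : ℝ) ^ d) ^ s ≤ N * (p : ℝ) ^ (n * d) := by gcongr
        _ ≤ _ := by rw [h1]; exact h2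
    have h5 : ((p : ℝ) ^ k) ^ s = ((p : ℝ) ^ l j) ^ s * ((p : ℝ) ^ d) ^ s := by
      rw [hd, pow_add, Real.mul_rpow (by positivity) (by positivity)]
    rw [h5, mul_inv]
    calc _ ≤ (((p : ℝ) ^ l j) ^ s)⁻¹ * (2 * (((p : ℝ) ^ d) ^ s)⁻¹) := by
          gcongr
          exact hmass j
      _ = _ := by ring
  · -- scales between the separation of the children and their size
    have hN1 : N = 1 := by rw [hN, min_eq_right hcase.le]; simp
    have h1 := hmass (j + 1)
    rw [Finset.prod_range_succ] at h1
    have h2 : ((p : ℝ) ^ k) ^ s ≤ ((p : ℝ) ^ l (j + 1)) ^ s :=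
      Real.rpow_le_rpow (by positivity) (pow_le_pow_right₀ hp1.le hkj.le) hs0
    rw [hN1, Nat.cast_one, one_div, ← mul_inv]
    have h3 : (0 : ℝ) < ((p : ℝ) ^ k) ^ s := by positivity
    calc _ ≤ (((p : ℝ) ^ k) ^ s)⁻¹ := inv_anti₀ h3 (h2.trans h1)
      _ ≤ _ := by linarith [inv_pos.2 h3]

/-! ### Membership in the liminf set and the mass distribution principle -/

/-- Approximations of unbounded quality are infinitely many; a single exact one has infinitely many
multiples. -/
lemma infinite_approx_of_forall (p : ℕ) [Fact p.Prime] (n : ℕ) {τ : ℝ} (x : Fin n → ℚ_[p])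
    (h : ∀ j : ℕ, ∃ rq : (Fin n → ℤ) × ℕ, p ∣ rq.2 ∧ PadicApprox p n τ x rq ∧
      ∀ i, ‖(rq.2 : ℚ_[p]) * x i - (rq.1 i : ℚ_[p])‖ ≤ ((p : ℝ) ^ j)⁻¹) :
    {rq : (Fin n → ℤ) × ℕ | p ∣ rq.2 ∧ PadicApprox p n τ x rq}.Infinite := by
  have hp1 : (1 : ℝ) < p := by exact_mod_cast (Fact.out : p.Prime).one_lt
  intro hfin
  let f : (Fin n → ℤ) × ℕ → ℝ := fun rq => ‖fun i => (rq.2 : ℚ_[p]) * x i - (rq.1 i : ℚ_[p])‖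
  obtain ⟨rq₀, h₀, h₀', -⟩ := h 0
  obtain ⟨rq, hrq, hmin⟩ := Set.exists_min_image _ f hfin ⟨rq₀, h₀, h₀'⟩
  rcases (norm_nonneg _ : 0 ≤ f rq).eq_or_lt with h0 | h0
  · have hz : ∀ i, (rq.2 : ℚ_[p]) * x i - (rq.1 i : ℚ_[p]) = 0 := fun i =>
      congrFun (norm_eq_zero.1 h0.symm) i
    refine Set.infinite_of_injective_forall_mem
      (f := fun c : ℕ => ((fun i => (c + 1 : ℤ) * rq.1 i, (c + 1) * rq.2) : (Fin n → ℤ) × ℕ))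
      ?_ ?_ hfin
    · intro c c' hc
      have h1 := congrArg Prod.snd hc
      have h2 := Nat.eq_of_mul_eq_mul_right hrq.2.1 h1
      omega
    · intro c
      have hpos : 0 < (c + 1) * rq.2 := Nat.mul_pos (Nat.succ_pos _) hrq.2.1
      refine ⟨hrq.1.mul_left _, hpos, fun i => ?_⟩
      have h1 : (((c + 1) * rq.2 : ℕ) : ℚ_[p]) * x i - (((c + 1 : ℤ) * rq.1 i : ℤ) : ℚ_[p]) = 0 := by
        have h2 := hz i
        push_cast
        linear_combination (c + 1 : ℚ_[p]) * h2
      dsimp only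
      rw [h1, norm_zero]
      apply Real.rpow_pos_of_pos
      exact_mod_cast lt_max_of_lt_left hpos
  · obtain ⟨j, hj⟩ := exists_pow_lt_of_lt_one h0 (inv_lt_one_of_one_lt₀ hp1)
    obtain ⟨rq', h1, h2, h3⟩ := h j
    have h4 : f rq' ≤ ((p : ℝ) ^ j)⁻¹ := (pi_norm_le_iff_of_nonneg (by positivity)).2 h3
    rw [inv_pow] at hj
    exact absurd (hmin rq' ⟨h1, h2⟩) (not_le.2 (h4.trans_lt hj))

/-- Denominators prime to `p` only give good approximations to points of `ℤ_pⁿ`. -/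
lemma not_approx_of_one_lt_norm (p : ℕ) [Fact p.Prime] (n : ℕ) {τ : ℝ} (hτ : 0 ≤ τ)
    (x : Fin n → ℚ_[p]) (i : Fin n) (hx : 1 < ‖x i‖) (rq : (Fin n → ℤ) × ℕ) (hq : ¬ p ∣ rq.2) :
    ¬ PadicApprox p n τ x rq := by
  rintro ⟨hq0, h⟩
  have h1 := (h i).trans_le (Real.rpow_le_one_of_one_le_of_nonpos
    (by exact_mod_cast hq0.trans_le (le_max_left _ _)) (by linarith))
  have h2 : ‖(rq.2 : ℚ_[p])‖ = 1 := by
    rw [Padic.norm_natCast_eq_one_iff]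
    exact (Fact.out : p.Prime).coprime_iff_not_dvd.2 hq
  have h3 : ‖(rq.2 : ℚ_[p]) * x i‖ ≤ 1 := by
    have h4 := Padic.nonarchimedean ((rq.2 : ℚ_[p]) * x i - (rq.1 i : ℚ_[p])) (rq.1 i : ℚ_[p])
    rw [sub_add_cancel] at h4
    exact h4.trans (max_le h1.le (Padic.norm_int_le_one _))
  rw [norm_mul, h2, one_mul] at h3
  linarith

/-- Mass distribution principle for balls whose radii are powers of `p⁻¹`. -/
lemma measure_le_hausdorffMeasure {X : Type*} [MetricSpace X] [MeasurableSpace X] [BorelSpace X]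
    (p : ℕ) (hp : 1 < p) (μ : Measure X) {s : ℝ} (hs : 0 < s)
    (h : ∀ x k, μ (Metric.closedBall x ((p : ℝ) ^ k)⁻¹) ≤
      ENNReal.ofReal (2 * (((p : ℝ) ^ k)⁻¹) ^ s)) :
    (ENNReal.ofReal (2 * (p : ℝ) ^ s))⁻¹ • μ ≤ Measure.hausdorffMeasure s := by
  have hp1 : (1 : ℝ) < p := by exact_mod_cast hp
  have hp0 : (0 : ℝ) < p := by linarith
  have hC : (0 : ℝ) < 2 * (p : ℝ) ^ s := by positivity
  refine Measure.le_hausdorffMeasure s _ 1 one_pos fun U hU => ?_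
  rw [Measure.smul_apply, smul_eq_mul, ENNReal.inv_mul_le_iff (ENNReal.ofReal_pos.2 hC).ne'
    ENNReal.ofReal_ne_top]
  rcases U.eq_empty_or_nonempty with rfl | ⟨x, hx⟩
  · simp
  have hne : Metric.ediam U ≠ ∞ := (hU.trans_lt ENNReal.one_lt_top).ne
  set d := (Metric.ediam U).toReal with hd
  have hdU : Metric.ediam U = ENNReal.ofReal d := (ENNReal.ofReal_toReal hne).symm
  have hd1 : d ≤ 1 := by
    rw [hd]; exact ENNReal.toReal_le_of_le_ofReal zero_le_one (by simpa using hU)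
  have hsub : ∀ k : ℕ, d ≤ ((p : ℝ) ^ k)⁻¹ → U ⊆ Metric.closedBall x ((p : ℝ) ^ k)⁻¹ := by
    intro k hk y hy
    rw [Metric.mem_closedBall, dist_edist]
    exact (ENNReal.toReal_mono hne (Metric.edist_le_ediam_of_mem hy hx)).trans hk
  have hinv : (p : ℝ)⁻¹ < 1 := inv_lt_one_of_one_lt₀ hp1
  have hd0 : 0 ≤ d := ENNReal.toReal_nonneg
  rcases hd0.eq_or_lt with h0 | h0
  · have hlim : Tendsto (fun k : ℕ => ENNReal.ofReal (2 * (((p : ℝ) ^ k)⁻¹) ^ s)) atTop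
        (nhds (ENNReal.ofReal (2 * (0 : ℝ) ^ s))) := by
      refine ENNReal.tendsto_ofReal (Tendsto.const_mul _ (Tendsto.rpow_const ?_ (Or.inr hs.le)))
      simp_rw [← inv_pow]
      exact tendsto_pow_atTop_nhds_zero_of_lt_one (by positivity) hinv
    rw [Real.zero_rpow hs.ne', mul_zero, ENNReal.ofReal_zero] at hlim
    have h1 : μ U ≤ 0 := ge_of_tendsto' hlim fun k =>
      (measure_mono (hsub k (by rw [← h0]; positivity))).trans (h x k)
    exact h1.trans zero_le
  · obtain ⟨k, hk1, hk2⟩ := exists_nat_pow_near_of_lt_one h0 hd1 (by positivity) hinv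
    rw [inv_pow] at hk1 hk2
    refine (measure_mono (hsub k hk2)).trans ((h x k).trans ?_)
    rw [hdU, ENNReal.ofReal_rpow_of_pos h0, ← ENNReal.ofReal_mul hC.le]
    refine ENNReal.ofReal_le_ofReal ?_
    rw [mul_assoc, ← Real.mul_rpow hp0.le hd0]
    have : ((p : ℝ) ^ k)⁻¹ ≤ p * d := by
      rw [pow_succ, mul_inv] at hk1
      calc ((p : ℝ) ^ k)⁻¹ = p * (((p : ℝ) ^ k)⁻¹ * (p : ℝ)⁻¹) := by field_simp
        _ ≤ _ := by gcongr
    gcongr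

/-! ### Construction of the Cantor set -/

/-- The points of the Cantor set: limits of the partial sums `x₀ + ∑_{i < j} p ^ (l i) z_i`. -/
lemma exists_cantor_map (p : ℕ) [Fact p.Prime] {n : ℕ} (R : ℕ → Finset (Fin n → ℕ))
    (l : ℕ → ℕ) (hl : StrictMono l) (x₀ : Fin n → ℚ_[p]) (z : ∀ j, R j → Fin n → ℚ_[p])
    (hz : ∀ j b i, ‖z j b i‖ ≤ 1) :
    ∃ g : (∀ j, R j) → Fin n → ℚ_[p], Measurable g ∧
      ∀ ω j, ‖g ω - (x₀ + ∑ i ∈ Finset.range j, (p : ℚ_[p]) ^ l i • z i (ω i))‖ ≤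
        ((p : ℝ) ^ l j)⁻¹ := by
  have hp1 : (1 : ℝ) < p := by exact_mod_cast (Fact.out : p.Prime).one_lt
  have hanti : ∀ {a b : ℕ}, a ≤ b → ((p : ℝ) ^ b)⁻¹ ≤ ((p : ℝ) ^ a)⁻¹ := fun h =>
    inv_anti₀ (by positivity) (pow_le_pow_right₀ hp1.le h)
  let c : ℕ → (∀ j, R j) → Fin n → ℚ_[p] := fun j ω =>
    x₀ + ∑ i ∈ Finset.range j, (p : ℚ_[p]) ^ l i • z i (ω i)
  have hc : ∀ ω j k, j ≤ k → dist (c k ω) (c j ω) ≤ ((p : ℝ) ^ l j)⁻¹ := by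
    intro ω j k hjk
    induction k, hjk using Nat.le_induction with
    | base => rw [dist_self]; positivity
    | succ k hjk ih =>
      refine (dist_triangle_max _ (c k ω) _).trans (max_le ?_ ih)
      have h1 : c (k + 1) ω - c k ω = (p : ℚ_[p]) ^ l k • z k (ω k) := by
        simp only [c, Finset.sum_range_succ]
        abel
      rw [dist_eq_norm, h1, norm_smul, norm_pow, Padic.norm_p, inv_pow]
      calc _ ≤ ((p : ℝ) ^ l k)⁻¹ * 1 := by
            gcongr
            exact (pi_norm_le_iff_of_nonneg zero_le_one).2 (hz k _)
        _ ≤ _ := by rw [mul_one]; exact hanti (hl.monotone hjk)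
  have hlim : Tendsto (fun j => ((p : ℝ) ^ l j)⁻¹) atTop (nhds 0) :=
    (tendsto_inv_atTop_zero.comp (tendsto_pow_atTop_atTop_of_one_lt hp1)).comp hl.tendsto_atTop
  have hex : ∀ ω, ∃ y, Tendsto (fun j => c j ω) atTop (nhds y) := by
    intro ω
    refine cauchySeq_tendsto_of_complete (cauchySeq_of_le_tendsto_0 _ (fun a b N ha hb => ?_) hlim)
    refine (dist_triangle_max _ (c N ω) _).trans (max_le (hc ω N a ha) ?_)
    rw [dist_comm]
    exact hc ω N b hb
  choose g hg using hex
  refine ⟨g, ?_, fun ω j => ?_⟩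
  · refine measurable_of_tendsto_metrizable (f := c) (fun j => ?_) (tendsto_pi_nhds.2 hg)
    refine measurable_const.add (Finset.measurable_fun_sum _ fun i _ => ?_)
    exact (measurable_from_top (f := fun b : R i => (p : ℚ_[p]) ^ l i • z i b)).comp
      (measurable_pi_apply i)
  · rw [← dist_eq_norm]
    refine le_of_tendsto ((hg ω).dist tendsto_const_nhds)
      (eventually_atTop.2 ⟨j, fun k hk => hc ω j k hk⟩)

/-- Given a level `p ^ l` and a height bound `H`, suitable parameters for the next construction step:
`p ^ (n t)` bounds the heights of the new digits, and `l'` is the next level. -/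
lemma exists_step (p : ℕ) [Fact p.Prime] (n k₀ : ℕ) (hn : 1 ≤ n) {τ s : ℝ} (hτ1 : 1 < τ)
    (hτ : (n : ℝ) + 1 ≤ n * τ) (hs0 : 0 ≤ s) (hs : s * τ < n + 1) (l H : ℕ) (hH : 1 ≤ H) :
    ∃ t l' : ℕ, 0 < t ∧ k₀ < (n + 1) * t ∧
      ((2 * p ^ l * H * p ^ (n * t) : ℕ) : ℝ) ^ τ ≤ (p : ℝ) ^ l' ∧
      l + ((n + 1) * t - k₀) ≤ l' ∧
      2 * ((p : ℝ) ^ l') ^ s ≤ (p : ℝ) ^ (n * ((n + 1) * t - k₀)) := by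
  have hp1 : (1 : ℝ) < p := by exact_mod_cast (Fact.out : p.Prime).one_lt
  have hp2 : (2 : ℝ) ≤ p := by exact_mod_cast (Fact.out : p.Prime).two_le
  have hp0 : (0 : ℝ) < p := by linarith
  have hn' : (1 : ℝ) ≤ n := by exact_mod_cast hn
  -- all earlier data are absorbed in the constant factor `p ^ L`
  obtain ⟨L, hL⟩ : ∃ L, 2 * p ^ l * H ≤ p ^ L :=
    ⟨_, (Nat.lt_pow_self (Fact.out : p.Prime).one_lt).le⟩
  have hlL : l ≤ L := by
    refine (Nat.pow_le_pow_iff_right (Fact.out : p.Prime).one_lt).1 (le_trans ?_ hL)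
    nlinarith [Nat.zero_le (p ^ l)]
  have hδ : 0 < n * (n + 1 - s * τ) := mul_pos (by linarith) (by linarith)
  obtain ⟨t₀, ht₀⟩ := exists_nat_ge ((1 + s * τ * L + s + n * k₀) / (n * (n + 1 - s * τ)))
  let t := t₀ + k₀ + 1
  have ht : 1 + s * τ * L + s + n * k₀ ≤ t * (n * (n + 1 - s * τ)) := by
    rw [div_le_iff₀ hδ] at ht₀
    refine ht₀.trans (mul_le_mul_of_nonneg_right ?_ hδ.le)
    simp only [t]
    push_cast
    linarith [(Nat.cast_nonneg k₀ : (0 : ℝ) ≤ k₀)]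
  have hkt : k₀ < (n + 1) * t := by
    have : t ≤ (n + 1) * t := Nat.le_mul_of_pos_left _ (Nat.succ_pos _)
    omega
  have hm : (((n + 1) * t - k₀ : ℕ) : ℝ) = (n + 1) * t - k₀ := by
    rw [Nat.cast_sub hkt.le]; push_cast; ring
  have hX0 : 0 ≤ τ * (L + n * t) := by positivity
  refine ⟨t, ⌈τ * (L + n * t)⌉₊, by omega, hkt, ?_, ?_, ?_⟩
  · have h1 : ((2 * p ^ l * H * p ^ (n * t) : ℕ) : ℝ) ≤ (p : ℝ) ^ (L + n * t) := by
      rw [pow_add]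
      exact_mod_cast Nat.mul_le_mul_right _ hL
    calc _ ≤ ((p : ℝ) ^ (L + n * t)) ^ τ :=
          Real.rpow_le_rpow (Nat.cast_nonneg _) h1 (by linarith)
      _ = (p : ℝ) ^ (τ * (L + n * t)) := by
          rw [← Real.rpow_natCast, ← Real.rpow_mul hp0.le]
          push_cast
          ring_nf
      _ ≤ (p : ℝ) ^ ((⌈τ * (L + n * t)⌉₊ : ℕ) : ℝ) :=
          Real.rpow_le_rpow_of_exponent_le hp1.le (Nat.le_ceil _)
      _ = _ := Real.rpow_natCast _ _
  · refine Nat.cast_le (α := ℝ) |>.1 (le_trans ?_ (Nat.le_ceil _))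
    rw [Nat.cast_add, hm]
    have h1 : (l : ℝ) ≤ L := by exact_mod_cast hlL
    have h2 : (0 : ℝ) ≤ L := Nat.cast_nonneg _
    have h3 : (0 : ℝ) ≤ t := Nat.cast_nonneg _
    have h4 : (0 : ℝ) ≤ k₀ := Nat.cast_nonneg _
    nlinarith [mul_le_mul_of_nonneg_right hτ h3, mul_le_mul_of_nonneg_right hτ1.le h2]
  · have h1 := (Nat.ceil_lt_add_one hX0).le
    have h2 : 1 + s * (⌈τ * (L + n * t)⌉₊ : ℕ) ≤ ((n * ((n + 1) * t - k₀) : ℕ) : ℝ) := by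
      rw [Nat.cast_mul, hm]
      nlinarith [mul_le_mul_of_nonneg_left h1 hs0]
    rw [← Real.rpow_natCast _ ⌈_⌉₊, ← Real.rpow_natCast _ (n * _), ← Real.rpow_mul hp0.le]
    calc _ ≤ (p : ℝ) ^ (1 : ℝ) * (p : ℝ) ^ ((⌈τ * (L + n * t)⌉₊ : ℕ) * s) := by
          rw [Real.rpow_one]; gcongr
      _ = (p : ℝ) ^ (1 + s * (⌈τ * (L + n * t)⌉₊ : ℕ)) := by
          rw [← Real.rpow_add hp0, mul_comm s]
      _ ≤ _ := Real.rpow_le_rpow_of_exponent_le hp1.le h2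

/-- Iteration of `exists_step`: the levels `l`, the height bounds `H` and the parameters `t` of the
whole construction. -/
lemma exists_parameters (p : ℕ) [Fact p.Prime] (n k₀ : ℕ) (hn : 1 ≤ n) {τ s : ℝ} (hτ1 : 1 < τ)
    (hτ : (n : ℝ) + 1 ≤ n * τ) (hs0 : 0 ≤ s) (hs : s * τ < n + 1) :
    ∃ l H t : ℕ → ℕ, l 0 = 0 ∧ H 0 = p ∧ ∀ j, 0 < t j ∧ k₀ < (n + 1) * t j ∧
      H (j + 1) = 2 * p ^ l j * H j * p ^ (n * t j) ∧
      (H (j + 1) : ℝ) ^ τ ≤ (p : ℝ) ^ l (j + 1) ∧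
      l j + ((n + 1) * t j - k₀) ≤ l (j + 1) ∧
      2 * ((p : ℝ) ^ l (j + 1)) ^ s ≤ (p : ℝ) ^ (n * ((n + 1) * t j - k₀)) := by
  choose! t l' h using exists_step p n k₀ hn hτ1 hτ hs0 hs
  let st : ℕ → ℕ × ℕ := fun j => Nat.rec (0, p)
    (fun _ x => (l' x.1 x.2, 2 * p ^ x.1 * x.2 * p ^ (n * t x.1 x.2))) j
  have hH : ∀ j, 1 ≤ (st j).2 := by
    intro j
    have hp := (Fact.out : p.Prime).pos
    induction j with
    | zero => exact hp
    | succ j ih =>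
      change 0 < 2 * p ^ (st j).1 * (st j).2 * p ^ _
      positivity
  refine ⟨fun j => (st j).1, fun j => (st j).2, fun j => t (st j).1 (st j).2, rfl, rfl,
    fun j => ?_⟩
  obtain ⟨h1, h2, h3, h4, h5⟩ := h (st j).1 (st j).2 (hH j)
  exact ⟨h1, h2, rfl, h3, h4, h5⟩

/-- A partial sum of fractions of small height is a fraction of controlled height, and its
denominator stays divisible by `p`. -/
lemma exists_pair_partial_sum (p : ℕ) [Fact p.Prime] {n : ℕ} (R : ℕ → Finset (Fin n → ℕ))
    (l H Q : ℕ → ℕ) (hH0 : H 0 = p) (hH : ∀ j, H (j + 1) = 2 * p ^ l j * H j * Q j)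
    (q : ∀ j, R j → ℕ) (r : ∀ j, R j → Fin n → ℤ) (hq0 : ∀ j b, 0 < q j b)
    (hq : ∀ j b, q j b ≤ Q j) (hr : ∀ j b i, (r j b i).natAbs ≤ Q j) (ω : ∀ j, R j) (j : ℕ) :
    ∃ rq : (Fin n → ℤ) × ℕ, p ∣ rq.2 ∧ 0 < rq.2 ∧ pairHeight rq ≤ H j ∧
      ∀ i, (rq.2 : ℚ_[p]) * ((fun _ => (p : ℚ_[p])⁻¹) + ∑ k ∈ Finset.range j,
        (p : ℚ_[p]) ^ l k • fun i => (r k (ω k) i : ℚ_[p]) / (q k (ω k) : ℚ_[p]) :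
          Fin n → ℚ_[p]) i =
          (rq.1 i : ℚ_[p]) := by
  have hp := (Fact.out : p.Prime).pos
  have hp' : (p : ℚ_[p]) ≠ 0 := by exact_mod_cast hp.ne'
  induction j with
  | zero =>
    refine ⟨(fun _ => 1, p), dvd_rfl, hp, ?_, fun i => ?_⟩
    · rw [pairHeight_le_iff, hH0]
      exact ⟨le_rfl, fun _ => by simpa using Nat.succ_le_of_lt hp⟩
    · simp [hp']
  | succ j ih =>
    obtain ⟨rq, h1, h2, h3, h4⟩ := ih
    obtain ⟨h5, h6⟩ := (pairHeight_le_iff _ _).1 h3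
    have hqj := hq j (ω j)
    have hqj0 := hq0 j (ω j)
    have hrj := hr j (ω j)
    have hpl : 1 ≤ p ^ l j := Nat.one_le_pow _ _ hp
    refine ⟨(fun i => rq.1 i * q j (ω j) + p ^ l j * rq.2 * r j (ω j) i, rq.2 * q j (ω j)),
      h1.mul_right _, Nat.mul_pos h2 hqj0, ?_, fun i => ?_⟩
    · rw [pairHeight_le_iff, hH]
      have h7 : H j * Q j ≤ p ^ l j * (H j * Q j) := Nat.le_mul_of_pos_left _ hpl
      have h8 : 2 * p ^ l j * H j * Q j = p ^ l j * (H j * Q j) + p ^ l j * (H j * Q j) := by ring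
      rw [h8]
      refine ⟨(Nat.mul_le_mul h5 hqj).trans (by omega), fun i => ?_⟩
      refine (Int.natAbs_add_le _ _).trans (add_le_add ?_ ?_)
      · rw [Int.natAbs_mul, Int.natAbs_natCast]
        exact (Nat.mul_le_mul (h6 i) hqj).trans h7
      · rw [mul_assoc, Int.natAbs_mul, Int.natAbs_mul, Int.natAbs_pow, Int.natAbs_natCast,
          Int.natAbs_natCast]
        exact Nat.mul_le_mul_left _ (Nat.mul_le_mul h5 (hrj i))
    · have h7 := h4 i
      have h8 : (q j (ω j) : ℚ_[p]) ≠ 0 := by exact_mod_cast hqj0.ne'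
      rw [Finset.sum_range_succ, ← add_assoc, Pi.add_apply]
      simp only [Pi.smul_apply, smul_eq_mul]
      push_cast
      rw [← h7]
      field_simp

/-- Points of the Cantor set around `(p⁻¹, …, p⁻¹)` whose partial sums are fractions of controlled
height belong to the liminf set. -/
lemma mem_WStarPadic_of_cantor (p : ℕ) [Fact p.Prime] {n : ℕ} (hn : 1 ≤ n) {τ : ℝ} (hτ : 0 < τ)
    (l H : ℕ → ℕ) (hl : StrictMono l)
    (hlH : ∀ j, (H (j + 1) : ℝ) ^ τ ≤ (p : ℝ) ^ l (j + 1)) (x : Fin n → ℚ_[p])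
    (hx₀ : ∀ i, ‖x i - (p : ℚ_[p])⁻¹‖ ≤ 1)
    (hx : ∀ j, ∃ c : Fin n → ℚ_[p], ‖x - c‖ ≤ ((p : ℝ) ^ l j)⁻¹ ∧
      ∃ rq : (Fin n → ℤ) × ℕ, p ∣ rq.2 ∧ 0 < rq.2 ∧ pairHeight rq ≤ H j ∧
        ∀ i, (rq.2 : ℚ_[p]) * c i = (rq.1 i : ℚ_[p])) :
    x ∈ WStarPadic p n τ := by
  have hp1 : (1 : ℝ) < p := by exact_mod_cast (Fact.out : p.Prime).one_lt
  have hp0 : (0 : ℝ) < p := by linarith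
  constructor
  · refine infinite_approx_of_forall p n x fun j => ?_
    obtain ⟨c, hc, rq, h1, h2, h3, h4⟩ := hx (j + 1)
    have hq : ‖(rq.2 : ℚ_[p])‖ ≤ (p : ℝ)⁻¹ := by
      have := (norm_int_le_inv_pow_iff p (rq.2 : ℤ) 1).2 (by simpa using Int.natCast_dvd_natCast.2 h1)
      simpa using this
    have h5 : ∀ i, ‖(rq.2 : ℚ_[p]) * x i - (rq.1 i : ℚ_[p])‖ ≤
        (p : ℝ)⁻¹ * ((p : ℝ) ^ l (j + 1))⁻¹ := by
      intro i
      rw [← h4 i, ← mul_sub, norm_mul]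
      exact mul_le_mul hq ((norm_le_pi_norm (x - c) i).trans hc) (norm_nonneg _) (by positivity)
    have h6 : (p : ℝ)⁻¹ * ((p : ℝ) ^ l (j + 1))⁻¹ < ((p : ℝ) ^ l (j + 1))⁻¹ :=
      mul_lt_of_lt_one_left (by positivity) (inv_lt_one_of_one_lt₀ hp1)
    refine ⟨rq, h1, ⟨h2, fun i => ((h5 i).trans_lt h6).trans_le ?_⟩, fun i =>
      ((h5 i).trans h6.le).trans ?_⟩
    · change _ ≤ (pairHeight rq : ℝ) ^ (-τ)
      have h7 : (0 : ℝ) < pairHeight rq := by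
        exact_mod_cast h2.trans_le ((pairHeight_le_iff rq _).1 le_rfl).1
      rw [Real.rpow_neg h7.le]
      refine inv_anti₀ (by positivity) (le_trans ?_ (hlH j))
      exact Real.rpow_le_rpow h7.le (by exact_mod_cast h3) hτ.le
    · refine inv_anti₀ (by positivity) (pow_le_pow_right₀ hp1.le ?_)
      have := hl.id_le (j + 1)
      simp only [id] at this
      omega
  · have hx1 : 1 < ‖x ⟨0, hn⟩‖ := by
      by_contra! hle
      have h1 := Padic.nonarchimedean (-(x ⟨0, hn⟩ - (p : ℚ_[p])⁻¹)) (x ⟨0, hn⟩)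
      rw [norm_neg] at h1
      have h2 := h1.trans (max_le (hx₀ _) hle)
      rw [neg_sub, sub_add_cancel, norm_inv, Padic.norm_p, inv_inv] at h2
      linarith
    exact Set.finite_empty.subset fun rq hrq =>
      (not_approx_of_one_lt_norm p n hτ.le x _ hx1 rq hrq.1 hrq.2).elim

/-- The Cantor measure charges the liminf set, so its `s`-dimensional Hausdorff measure is
positive for every `s < (n + 1) / τ`. -/
lemma hausdorffMeasure_WStarPadic_ne_zero (p : ℕ) [Fact p.Prime] {n : ℕ} (hn : 1 ≤ n) {τ s : ℝ}
    (hτ1 : 1 < τ) (hτ : (n : ℝ) + 1 ≤ n * τ) (hs0 : 0 < s) (hs : s * τ < n + 1) :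
    Measure.hausdorffMeasure s (WStarPadic p n τ) ≠ 0 := by
  have hprime := (Fact.out : p.Prime)
  have hp1 : (1 : ℝ) < p := by exact_mod_cast hprime.one_lt
  have hp0 : (0 : ℝ) < p := by linarith
  obtain ⟨k₀, hk₀⟩ : ∃ k₀, 2 * 3 ^ n ≤ p ^ k₀ := ⟨_, (Nat.lt_pow_self hprime.one_lt).le⟩
  obtain ⟨l, H, t, hl0, hH0, h⟩ := exists_parameters p n k₀ hn hτ1 hτ hs0.le hs
  choose ht hkt hH hlH hl hmass using h
  let m : ℕ → ℕ := fun j => (n + 1) * t j - k₀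
  let R : ℕ → Finset (Fin n → ℕ) := fun j => goodResidues p n (p ^ (n * t j)) (m j)
  have hm : ∀ j, 0 < m j := fun j => Nat.sub_pos_of_lt (hkt j)
  have hcard : ∀ j, p ^ (n * m j) ≤ 2 * (R j).card := fun j =>
    card_goodResidues p n (t j) k₀ (ht j) hk₀ (hkt j).le
  have hcardpos : ∀ j, 0 < (R j).card := fun j => by
    have := hcard j
    have := Nat.pow_pos (n := n * m j) hprime.pos
    omega
  have hne : ∀ j, Nonempty (R j) := fun j =>
    Finset.nonempty_coe_sort.2 (Finset.card_pos.1 (hcardpos j))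
  have hlm : StrictMono l := strictMono_nat_of_lt_succ fun j => by
    have := hl j; have := hm j; simp only [m] at this; omega
  have hRsub : ∀ j, R j ⊆ Fintype.piFinset fun _ => Finset.range (p ^ m j) := fun j => by
    classical
    exact Finset.filter_subset _ _
  have hgood : ∀ j (b : R j), ∃ (q : ℕ) (r : Fin n → ℤ), 0 < q ∧ ¬ p ∣ q ∧ q ≤ p ^ (n * t j) ∧
      (∀ i, (r i).natAbs ≤ p ^ (n * t j)) ∧
      ∀ i, ((p ^ m j : ℕ) : ℤ) ∣ (q : ℤ) * (b.1 i : ℤ) - r i := fun j b => by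
    classical
    exact (Finset.mem_filter.1 b.2).2
  choose q r hq0 hpq hqle hrle hdvd using hgood
  let z : ∀ j, R j → Fin n → ℚ_[p] := fun j b i => (r j b i : ℚ_[p]) / (q j b : ℚ_[p])
  have hqnorm : ∀ j b, ‖(q j b : ℚ_[p])‖ = 1 := fun j b => by
    rw [Padic.norm_natCast_eq_one_iff]
    exact hprime.coprime_iff_not_dvd.2 (hpq j b)
  have hz1 : ∀ j b i, ‖z j b i‖ ≤ 1 := fun j b i => by
    simp only [z]
    rw [norm_div, hqnorm, div_one]
    exact Padic.norm_int_le_one _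
  have hz : ∀ j b i, ‖z j b i - ((b.1 i : ℕ) : ℚ_[p])‖ ≤ ((p : ℝ) ^ m j)⁻¹ := fun j b i => by
    have h1 := (norm_int_le_inv_pow_iff p _ _).2 (hdvd j b i)
    have hq0' : (q j b : ℚ_[p]) ≠ 0 := by exact_mod_cast (hq0 j b).ne'
    have h2 : (((q j b : ℤ) * (b.1 i : ℤ) - r j b i : ℤ) : ℚ_[p]) =
        -((q j b : ℚ_[p]) * (z j b i - ((b.1 i : ℕ) : ℚ_[p]))) := by
      simp only [z]
      push_cast
      field_simp
      ring
    rwa [h2, norm_neg, norm_mul, hqnorm, one_mul] at h1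
  obtain ⟨g, hgm, hg⟩ := exists_cantor_map p R l hlm (fun _ => (p : ℚ_[p])⁻¹) z hz1
  have hsn : s ≤ n := by
    have h1 : s * τ ≤ n * τ := by linarith
    exact le_of_mul_le_mul_right h1 (by linarith)
  have hprod1 : ∀ j, (1 : ℝ) ≤ ∏ i ∈ Finset.range j, ((R i).card : ℝ) := fun j => by
    rw [← Nat.cast_prod]
    exact_mod_cast Finset.prod_pos fun i _ => hcardpos i
  have hmass' : ∀ j, ((p : ℝ) ^ l j) ^ s ≤ ∏ i ∈ Finset.range j, ((R i).card : ℝ) := by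
    rintro (_ | j)
    · simp [hl0]
    · have h1 : (p : ℝ) ^ (n * m j) ≤ 2 * (R j).card := by exact_mod_cast hcard j
      have h2 := (hmass j).trans h1
      rw [Finset.prod_range_succ]
      refine le_trans ?_ (le_mul_of_one_le_left (Nat.cast_nonneg _) (hprod1 j))
      linarith
  have hball := digitMeasure_ball_le p R hne m l _ z hRsub hcard hz hl0 hm hl hs0.le hsn hmass' g hg
  have hmem : ∀ ω, g ω ∈ WStarPadic p n τ := by
    intro ω
    refine mem_WStarPadic_of_cantor p hn (by linarith) l H hlm hlH _ (fun i => ?_) fun j =>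
      ⟨_, hg ω j, exists_pair_partial_sum p R l H (fun j => p ^ (n * t j)) hH0 hH q r hq0 hqle hrle
        ω j⟩
    have h1 := (norm_le_pi_norm _ i).trans (hg ω 0)
    simpa [hl0] using h1
  set μ := Measure.map g (digitMeasure R hne) with hμ
  have hle := measure_le_hausdorffMeasure p hprime.one_lt μ hs0 fun x k => by
    rw [hμ, Measure.map_apply hgm Metric.isClosed_closedBall.measurableSet]
    exact hball x k
  have hμW : 1 ≤ μ (WStarPadic p n τ) := by
    refine le_trans ?_ (Measure.le_map_apply hgm.aemeasurable _)
    rw [Set.eq_univ_of_forall hmem (s := g ⁻¹' WStarPadic p n τ), measure_univ]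
  intro h0
  have h1 := hle (WStarPadic p n τ)
  rw [h0, Measure.smul_apply, smul_eq_mul, nonpos_iff_eq_zero, mul_eq_zero, ENNReal.inv_eq_zero] at h1
  rcases h1 with h1 | h1
  · exact ENNReal.ofReal_ne_top h1
  · rw [h1] at hμW
    exact absurd hμW (by simp)

theorem dimH_WStarPadic (p : ℕ) [Fact p.Prime] (n : ℕ) (hn : 1 ≤ n) (τ : ℝ)
    (hτ : 1 + 1 / (n : ℝ) < τ) :
    dimH (WStarPadic p n τ) = ENNReal.ofReal ((n + 1) / τ) := by
  have hn0 : (0 : ℝ) < n := by exact_mod_cast hn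
  have hτ1 : 1 < τ := lt_trans (lt_add_of_pos_right _ (by positivity)) hτ
  have hτn : (n : ℝ) + 1 ≤ n * τ := by
    have h1 := mul_lt_mul_of_pos_left hτ hn0
    rw [mul_add, mul_one, mul_one_div_cancel hn0.ne'] at h1
    exact h1.le
  refine le_antisymm (dimH_WStarPadic_le p n hτ1) (ENNReal.le_of_forall_nnreal_lt fun s hs => ?_)
  rcases eq_or_ne s 0 with rfl | hs0
  · simp
  refine le_dimH_of_hausdorffMeasure_ne_zero ?_
  refine hausdorffMeasure_WStarPadic_ne_zero p hn hτ1 hτn (NNReal.coe_pos.2 (pos_iff_ne_zero.2 hs0)) ?_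
  rw [ENNReal.ofReal, ENNReal.coe_lt_coe, ← NNReal.coe_lt_coe,
    Real.coe_toNNReal _ (by positivity)] at hs
  exact (lt_div_iff₀ (by linarith)).1 hs
end

section
/- Let p be a prime, n ≥ 1 an integer and τ ≥ 1 a real number. Then W*_{τ,n}(p) ∩ ℤ_p^n = ∅, i.e. no point of ℤ_p^n lies in the liminf set W*_{τ,n}(p). -/
/-!
Let `x ∈ ℤ_pⁿ` and call a solution `(r, q)` *coprime* if `p ∤ q`. The proof shows that infinitely
many solutions with `p ∣ q` force infinitely many coprime ones.

It is enough to produce coprime solutions whose error `|qx - r|_p` is arbitrarily small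
(`infinite_of_small_errors`): if there were only finitely many coprime solutions, one of them
would have error zero, and then its multiples by the integers `m` with `p ∤ m` are infinitely many
coprime solutions (`infinite_of_exact`).

* For `τ = 1`, truncating the `p`-adic expansions of the `x i` after `k` digits gives a solution
  with `q = 1` and error at most `p ^ (-k)` (`exists_approx_one`).
* For `τ > 1`, let `(r, q)` be a solution with `p ∣ q` and put `M = max(|r|, q)`, `q = p ^ k * q'`
  with `p ∤ q'`. As `x` is integral and `|qx - r|_p < M ^ (-τ) ≤ p ^ (-k)`, the vector `r` is
  divisible by `p ^ k`, and dividing by `p ^ k` gives a coprime solution with error less than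
  `M ^ (1 - τ)` (`descent`). Infinitely many solutions make `M` unbounded.
-/

open Filter
open scoped ENNReal

/-- The height `max(|r|, q)` of a pair `(r, q)`. -/
def approxHeight {n : ℕ} (rq : (Fin n → ℤ) × ℕ) : ℕ :=
  max rq.2 (Finset.univ.sup fun j => (rq.1 j).natAbs)

lemma le_approxHeight {n : ℕ} (rq : (Fin n → ℤ) × ℕ) : rq.2 ≤ approxHeight rq :=
  le_max_left _ _

lemma natAbs_le_approxHeight {n : ℕ} (rq : (Fin n → ℤ) × ℕ) (i : Fin n) :
    (rq.1 i).natAbs ≤ approxHeight rq :=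
  (Finset.le_sup (f := fun j => (rq.1 j).natAbs) (Finset.mem_univ i)).trans (le_max_right _ _)

lemma approxHeight_le {n : ℕ} {rq : (Fin n → ℤ) × ℕ} {N : ℕ} (h : rq.2 ≤ N)
    (h' : ∀ i, (rq.1 i).natAbs ≤ N) : approxHeight rq ≤ N :=
  max_le h (Finset.sup_le fun i _ => h' i)

lemma finite_approxHeight_le (n N : ℕ) :
    {rq : (Fin n → ℤ) × ℕ | approxHeight rq ≤ N}.Finite := by
  refine ((Set.Finite.pi' fun _ : Fin n => Set.finite_Icc (-(N : ℤ)) N).prod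
    (Set.finite_Iic N)).subset fun rq h => ?_
  refine Set.mem_prod.2 ⟨fun i => ?_, (le_approxHeight rq).trans h⟩
  have h1 := (natAbs_le_approxHeight rq i).trans h
  exact Set.mem_Icc.2 (by omega)

section

variable {p : ℕ} [Fact p.Prime] {n : ℕ} {τ : ℝ} {x : Fin n → ℚ_[p]}

/-- An exact solution `qx = r` with `p ∤ q` yields infinitely many: its multiples by `1 + p * m`. -/
lemma infinite_of_exact (rq : (Fin n → ℤ) × ℕ) (hq : ¬ p ∣ rq.2)
    (hx : ∀ i, (rq.2 : ℚ_[p]) * x i - (rq.1 i : ℚ_[p]) = 0) :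
    {rq : (Fin n → ℤ) × ℕ | ¬ p ∣ rq.2 ∧ PadicApprox p n τ x rq}.Infinite := by
  have hp : p.Prime := Fact.out
  have hq0 : 0 < rq.2 := Nat.pos_of_ne_zero fun h => hq (h ▸ dvd_zero p)
  refine Set.infinite_of_injective_forall_mem
    (f := fun m : ℕ => ((fun i => ((1 + p * m : ℕ) : ℤ) * rq.1 i, (1 + p * m) * rq.2) :
      (Fin n → ℤ) × ℕ)) ?_ ?_
  · intro a b h
    have h2 := congrArg Prod.snd h
    have h3 := Nat.eq_of_mul_eq_mul_right hq0 h2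
    exact Nat.eq_of_mul_eq_mul_left hp.pos (Nat.add_left_cancel h3)
  · intro m
    have hpos : 0 < (1 + p * m) * rq.2 := by positivity
    refine ⟨fun h => ?_, hpos, fun i => ?_⟩
    · rcases hp.dvd_mul.1 h with h | h
      · exact hp.one_lt.ne' (Nat.dvd_one.1 ((Nat.dvd_add_left (dvd_mul_right p m)).1 h))
      · exact hq h
    · have h0 : (((1 + p * m) * rq.2 : ℕ) : ℚ_[p]) * x i -
          ((((1 + p * m : ℕ) : ℤ) * rq.1 i : ℤ) : ℚ_[p]) = 0 := by
        have := hx i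
        push_cast
        linear_combination (1 + (p : ℚ_[p]) * m) * this
      dsimp only
      rw [h0, norm_zero]
      exact Real.rpow_pos_of_pos (Nat.cast_pos.2 (lt_of_lt_of_le hpos (le_max_left _ _))) _

/-- Coprime solutions with arbitrarily small error are infinite in number. -/
lemma infinite_of_small_errors
    (h : ∀ ε : ℝ, 0 < ε → ∃ rq : (Fin n → ℤ) × ℕ, ¬ p ∣ rq.2 ∧ PadicApprox p n τ x rq ∧
      ∀ i, ‖(rq.2 : ℚ_[p]) * x i - (rq.1 i : ℚ_[p])‖ < ε) :
    {rq : (Fin n → ℤ) × ℕ | ¬ p ∣ rq.2 ∧ PadicApprox p n τ x rq}.Infinite := by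
  by_contra hfin
  rw [Set.not_infinite] at hfin
  -- No coprime solution is exact, so each has a positive lower bound for its error.
  have hne : ∀ rq ∈ {rq : (Fin n → ℤ) × ℕ | ¬ p ∣ rq.2 ∧ PadicApprox p n τ x rq},
      ∀ᶠ ε : ℝ in nhdsWithin 0 (Set.Ioi 0),
        ¬ ∀ i, ‖(rq.2 : ℚ_[p]) * x i - (rq.1 i : ℚ_[p])‖ < ε := by
    intro rq hrq
    have : ∃ i, (rq.2 : ℚ_[p]) * x i - (rq.1 i : ℚ_[p]) ≠ 0 := by
      by_contra! hc
      exact infinite_of_exact (τ := τ) rq hrq.1 hc hfin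
    obtain ⟨i, hi⟩ := this
    filter_upwards [Ioo_mem_nhdsGT (norm_pos_iff.2 hi)] with ε hε hall
    exact lt_asymm hε.2 (hall i)
  have hall := (Filter.eventually_all_finite hfin).2 hne
  obtain ⟨ε, hε, hε0⟩ := (hall.and self_mem_nhdsWithin).exists
  obtain ⟨rq, h1, h2, h3⟩ := h ε hε0
  exact hε rq ⟨h1, h2⟩ h3

/-- For `τ = 1`, the `k`-digit truncation of `x ∈ ℤ_pⁿ` is a solution with `q = 1`. -/
lemma exists_approx_one (hx : ∀ i, ‖x i‖ ≤ 1) {k : ℕ} (hk : k ≠ 0) :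
    ∃ r : Fin n → ℤ, PadicApprox p n 1 x (r, 1) ∧
      ∀ i, ‖((1 : ℕ) : ℚ_[p]) * x i - (r i : ℚ_[p])‖ ≤ (p : ℝ) ^ (-k : ℤ) := by
  have hp : p.Prime := Fact.out
  let y : Fin n → ℤ_[p] := fun i => ⟨x i, hx i⟩
  have herr : ∀ i, ‖((1 : ℕ) : ℚ_[p]) * x i - ((((y i).appr k : ℕ) : ℤ) : ℚ_[p])‖
      ≤ (p : ℝ) ^ (-k : ℤ) := by
    intro i
    have h := (PadicInt.norm_le_pow_iff_mem_span_pow _ k).2 (PadicInt.appr_spec k (y i))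
    rw [PadicInt.norm_def, PadicInt.coe_sub, PadicInt.coe_natCast] at h
    rw [Nat.cast_one, one_mul, Int.cast_natCast]
    exact h
  refine ⟨fun i => ((y i).appr k : ℕ), ⟨one_pos, fun i => (herr i).trans_lt ?_⟩, herr⟩
  -- The height is less than `p ^ k` because the truncations lie in `[0, p ^ k)` and `1 < p ^ k`.
  set M := max 1 (Finset.univ.sup fun j => (((y j).appr k : ℕ) : ℤ).natAbs) with hM
  have hM0 : 0 < M := lt_of_lt_of_le one_pos (le_max_left _ _)
  have hMlt : M < p ^ k := by
    refine max_lt (Nat.one_lt_pow hk hp.one_lt) ((Finset.sup_lt_iff (pow_pos hp.pos k)).2 ?_)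
    intro j _
    simpa using (y j).appr_lt k
  rw [Real.rpow_neg_one, zpow_neg, zpow_natCast]
  exact inv_strictAnti₀ (Nat.cast_pos.2 hM0) (by exact_mod_cast hMlt)

/-- Dividing a solution by the power of `p` in `q` gives a coprime solution, whose error is
controlled by the height of the original one. -/
lemma descent (hτ : 1 ≤ τ) (hx : ∀ i, ‖x i‖ ≤ 1) (rq : (Fin n → ℤ) × ℕ)
    (h : PadicApprox p n τ x rq) :
    ∃ rq' : (Fin n → ℤ) × ℕ, ¬ p ∣ rq'.2 ∧ PadicApprox p n τ x rq' ∧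
      ∀ i, ‖(rq'.2 : ℚ_[p]) * x i - (rq'.1 i : ℚ_[p])‖ < (approxHeight rq : ℝ) ^ (1 - τ) := by
  have hp : p.Prime := Fact.out
  obtain ⟨r, q⟩ := rq
  obtain ⟨hq0, herr⟩ := h
  change ∀ i, ‖(q : ℚ_[p]) * x i - (r i : ℚ_[p])‖ < (approxHeight (r, q) : ℝ) ^ (-τ) at herr
  change 0 < q at hq0
  have hqM : q ≤ approxHeight (r, q) := le_approxHeight (r, q)
  have hrM : ∀ i, (r i).natAbs ≤ approxHeight (r, q) := natAbs_le_approxHeight (r, q)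
  set M := approxHeight (r, q) with hM
  obtain ⟨k, q', hq', rfl⟩ := Nat.exists_eq_pow_mul_and_not_dvd hq0.ne' p hp.ne_one
  have hq'0 : 0 < q' := Nat.pos_of_ne_zero fun h => hq' (h ▸ dvd_zero p)
  have hP : 0 < p ^ k := pow_pos hp.pos k
  have hPR : (0 : ℝ) < (p : ℝ) ^ k := by exact_mod_cast hP
  have hPM : p ^ k ≤ M := (Nat.le_mul_of_pos_right _ hq'0).trans hqM
  have hM0 : (0 : ℝ) < M := by exact_mod_cast hP.trans_le hPM
  have hM1 : (1 : ℝ) ≤ M := by exact_mod_cast hP.trans_le hPM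
  have hPMR : (p : ℝ) ^ k ≤ M := by exact_mod_cast hPM
  have hnP : ‖(p : ℚ_[p]) ^ k‖ = ((p : ℝ) ^ k)⁻¹ := by
    rw [norm_pow, Padic.norm_p, inv_pow]
  have hdvd : ∀ i, ((p ^ k : ℕ) : ℤ) ∣ r i := by
    intro i
    have hz : (p : ℝ) ^ (-k : ℤ) = ((p : ℝ) ^ k)⁻¹ := by rw [zpow_neg, zpow_natCast]
    have h1 : ‖((p ^ k * q' : ℕ) : ℚ_[p]) * x i - (r i : ℚ_[p])‖ ≤ ((p : ℝ) ^ k)⁻¹ := by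
      refine (herr i).le.trans ?_
      calc (M : ℝ) ^ (-τ) ≤ (M : ℝ) ^ (-1 : ℝ) :=
            Real.rpow_le_rpow_of_exponent_le hM1 (by linarith)
        _ = (M : ℝ)⁻¹ := Real.rpow_neg_one _
        _ ≤ _ := inv_anti₀ hPR hPMR
    have h2 : ‖((p ^ k * q' : ℕ) : ℚ_[p]) * x i‖ ≤ ((p : ℝ) ^ k)⁻¹ := by
      push_cast
      rw [norm_mul, norm_mul, hnP, mul_assoc]
      refine mul_le_of_le_one_right (inv_nonneg.2 hPR.le) (mul_le_one₀ ?_ (norm_nonneg _) (hx i))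
      exact_mod_cast Padic.norm_int_le_one (q' : ℤ)
    have h3 : ‖(r i : ℚ_[p])‖ ≤ (p : ℝ) ^ (-k : ℤ) := by
      rw [hz]
      have := Padic.nonarchimedean (((p ^ k * q' : ℕ) : ℚ_[p]) * x i)
        (-(((p ^ k * q' : ℕ) : ℚ_[p]) * x i - (r i : ℚ_[p])))
      rw [norm_neg] at this
      simpa using this.trans (max_le h2 h1)
    exact_mod_cast (Padic.norm_int_le_pow_iff_dvd (r i) k).1 h3
  choose r' hr' using hdvd
  have herr' : ∀ i, ‖(q' : ℚ_[p]) * x i - (r' i : ℚ_[p])‖ < (p : ℝ) ^ k * (M : ℝ) ^ (-τ) := by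
    intro i
    have h1 := herr i
    have h2 : ((p ^ k * q' : ℕ) : ℚ_[p]) * x i - (r i : ℚ_[p]) =
        (p : ℚ_[p]) ^ k * ((q' : ℚ_[p]) * x i - (r' i : ℚ_[p])) := by
      rw [hr' i]; push_cast; ring
    rw [h2, norm_mul, hnP] at h1
    exact (inv_mul_lt_iff₀ hPR).1 h1
  refine ⟨(r', q'), hq', ⟨hq'0, fun i => (herr' i).trans_le ?_⟩, fun i => (herr' i).trans_le ?_⟩
  · change _ ≤ (approxHeight (r', q') : ℝ) ^ (-τ)
    have hM'0 : (0 : ℝ) < approxHeight (r', q') := by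
      exact_mod_cast hq'0.trans_le (le_approxHeight (r', q'))
    have hle : approxHeight (r', q') ≤ M / p ^ k := by
      refine approxHeight_le ?_ fun i => ?_ <;> rw [Nat.le_div_iff_mul_le hP, mul_comm]
      · exact hqM
      · have := hrM i
        rwa [hr' i, Int.natAbs_mul, Int.natAbs_natCast] at this
    rw [Nat.le_div_iff_mul_le hP, mul_comm] at hle
    have hleR : (p : ℝ) ^ k * approxHeight (r', q') ≤ M := by exact_mod_cast hle
    have hP1 : (1 : ℝ) ≤ (p : ℝ) ^ k := by exact_mod_cast hP
    calc (p : ℝ) ^ k * (M : ℝ) ^ (-τ)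
        ≤ (p : ℝ) ^ k * ((p : ℝ) ^ k * approxHeight (r', q')) ^ (-τ) := by
          gcongr ?_ * ?_
          exact Real.rpow_le_rpow_of_nonpos (by positivity) hleR (by linarith)
      _ = ((p : ℝ) ^ k) ^ (1 - τ) * (approxHeight (r', q') : ℝ) ^ (-τ) := by
          rw [Real.mul_rpow hPR.le hM'0.le, ← mul_assoc, sub_eq_add_neg,
            Real.rpow_add hPR, Real.rpow_one]
      _ ≤ _ := mul_le_of_le_one_left (Real.rpow_nonneg hM'0.le _)
          (Real.rpow_le_one_of_one_le_of_nonpos hP1 (by linarith))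
  · rw [sub_eq_add_neg, Real.rpow_add hM0, Real.rpow_one]
    gcongr

end

theorem WStarPadic_inter_integers_eq_empty (p : ℕ) [Fact p.Prime] (n : ℕ)
    (hn : 1 ≤ n) (τ : ℝ) (hτ : 1 ≤ τ) :
    WStarPadic p n τ ∩ {x : Fin n → ℚ_[p] | ∀ i, ‖x i‖ ≤ 1} = ∅ := by
  have hp : p.Prime := Fact.out
  rw [Set.eq_empty_iff_forall_notMem]
  rintro x ⟨⟨hinf, hfin⟩, hx⟩
  refine infinite_of_small_errors (fun ε hε => ?_) hfin
  rcases hτ.eq_or_lt with rfl | hτ1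
  · obtain ⟨k, hk⟩ := exists_pow_lt_of_lt_one hε
      (inv_lt_one_of_one_lt₀ (by exact_mod_cast hp.one_lt : (1 : ℝ) < p))
    -- Truncate at `k + 1` digits, as at least one digit is needed.
    obtain ⟨r, h1, h2⟩ := exists_approx_one hx (Nat.succ_ne_zero k)
    refine ⟨(r, 1), fun h => hp.one_lt.ne' (Nat.dvd_one.1 h), h1,
      fun i => (h2 i).trans_lt (lt_of_le_of_lt ?_ hk)⟩
    rw [zpow_neg, zpow_natCast, ← inv_pow]
    exact pow_le_pow_of_le_one (by positivity)
      (inv_le_one_of_one_le₀ (by exact_mod_cast hp.one_le)) (Nat.le_succ k)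
  · have hlim : Tendsto (fun N : ℕ => (N : ℝ) ^ (1 - τ)) atTop (nhds 0) := by
      have := (tendsto_rpow_neg_atTop (sub_pos.2 hτ1)).comp tendsto_natCast_atTop_atTop
      simpa [Function.comp_def] using this
    obtain ⟨N, hN⟩ := eventually_atTop.1 (hlim.eventually (gt_mem_nhds hε))
    obtain ⟨rq, hrq, hrqN⟩ := hinf.exists_notMem_finite (finite_approxHeight_le n N)
    obtain ⟨rq', h1, h2, h3⟩ := descent hτ hx rq hrq.2
    exact ⟨rq', h1, h2, fun i => (h3 i).trans (hN _ (not_le.1 hrqN).le)⟩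
end

section
/- Let n ≥ 1 be an integer and τ > 2 a real number. There exists K ∈ ℕ such that for every integer k ≥ K the following holds: whenever q, q' are integers with k < q ≤ 2k and k < q' ≤ 2k, and p, p' ∈ ℤ^n satisfy p/q ≠ p'/q' (as vectors of rationals), the hypercubes C_τ(p/q) and C_τ(p'/q') are disjoint. -/
/-!
Distinct points `p/q ≠ p'/q'` differ in some coordinate, and two distinct rationals with
denominators `q, q' ≤ 2k` are at distance at least `1/(q q') ≥ 1/(4k²)`
(`one_div_mul_le_abs_div_sub_div`). If the cubes met, that distance would be below
`q^{-τ} + q'^{-τ} ≤ 2 k^{-τ}`. As `τ > 2`, the power `k^{τ-2}` eventually exceeds `8`, so that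
`2 k^{-τ} ≤ 1/(4k²)` and the cubes are disjoint.
-/

open scoped ENNReal

/-- The hypercube `C_τ(p/q) = ∏ᵢ (pᵢ/q - q^{-τ}, pᵢ/q + q^{-τ})` in `ℝⁿ`. -/
def Ctau (n : ℕ) (τ : ℝ) (p : Fin n → ℤ) (q : ℕ) : Set (Fin n → ℝ) :=
  Set.univ.pi fun i =>
    Set.Ioo ((p i : ℝ) / (q : ℝ) - (q : ℝ) ^ (-τ)) ((p i : ℝ) / (q : ℝ) + (q : ℝ) ^ (-τ))

theorem one_div_mul_le_abs_div_sub_div {a b : ℤ} {q q' : ℕ} (hq : 0 < q) (hq' : 0 < q')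
    (h : (a : ℚ) / (q : ℚ) ≠ (b : ℚ) / (q' : ℚ)) :
    1 / ((q : ℝ) * q') ≤ |(a : ℝ) / q - (b : ℝ) / q'| := by
  have hqQ : (q : ℚ) ≠ 0 := by positivity
  have hqQ' : (q' : ℚ) ≠ 0 := by positivity
  have hqR : (0 : ℝ) < q := by positivity
  have hqR' : (0 : ℝ) < q' := by positivity
  have hne : a * q' - q * b ≠ 0 := by
    intro h0
    apply h
    rw [div_eq_div_iff hqQ hqQ']
    have : a * q' = b * q := by linarith
    exact_mod_cast this
  have hone : (1 : ℝ) ≤ |(a : ℝ) * q' - q * b| := by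
    exact_mod_cast Int.one_le_abs hne
  rw [div_sub_div _ _ hqR.ne' hqR'.ne', abs_div, abs_of_pos (mul_pos hqR hqR')]
  gcongr

theorem two_mul_rpow_neg_le {τ k : ℝ} (hk : 0 < k) (h : 8 ≤ k ^ (τ - 2)) :
    2 * k ^ (-τ) ≤ 1 / (4 * k ^ 2) := by
  have hsplit : k ^ τ = k ^ (τ - 2) * k ^ 2 := by
    rw [← Real.rpow_natCast k 2, ← Real.rpow_add hk]
    norm_num
  rw [Real.rpow_neg hk.le, hsplit, ← div_eq_mul_inv, div_le_div_iff₀ (by positivity) (by positivity)]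
  nlinarith [sq_nonneg k]

theorem Ctau_disjoint_of_same_dyadic_range (n : ℕ) (hn : 1 ≤ n) (τ : ℝ)
    (hτ : 2 < τ) :
    ∃ K : ℕ, ∀ k : ℕ, K ≤ k → ∀ q q' : ℕ, k < q → q ≤ 2 * k → k < q' → q' ≤ 2 * k →
      ∀ p p' : Fin n → ℤ,
        (fun i => (p i : ℚ) / (q : ℚ)) ≠ (fun i => (p' i : ℚ) / (q' : ℚ)) →
        Ctau n τ p q ∩ Ctau n τ p' q' = ∅ := by
  have hlarge : ∀ᶠ k : ℕ in Filter.atTop, (8 : ℝ) ≤ (k : ℝ) ^ (τ - 2) :=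
    ((tendsto_rpow_atTop (by linarith : 0 < τ - 2)).comp
      tendsto_natCast_atTop_atTop).eventually_ge_atTop 8
  obtain ⟨K, hK⟩ := Filter.eventually_atTop.1 hlarge
  refine ⟨K, fun k hk q q' hkq hq2 hkq' hq2' p p' hne => ?_⟩
  have hk0 : 0 < k := by omega
  have hkR : (0 : ℝ) < k := by exact_mod_cast hk0
  have hq0 : (0 : ℝ) < q := by exact_mod_cast hk0.trans hkq
  have hq0' : (0 : ℝ) < q' := by exact_mod_cast hk0.trans hkq'
  obtain ⟨i, hi⟩ := Function.ne_iff.1 hne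
  have hgap := one_div_mul_le_abs_div_sub_div (hk0.trans hkq) (hk0.trans hkq') hi
  have hrad := two_mul_rpow_neg_le hkR (hK k hk)
  have hr : (q : ℝ) ^ (-τ) ≤ (k : ℝ) ^ (-τ) :=
    Real.rpow_le_rpow_of_nonpos hkR (by exact_mod_cast hkq.le) (by linarith)
  have hr' : (q' : ℝ) ^ (-τ) ≤ (k : ℝ) ^ (-τ) :=
    Real.rpow_le_rpow_of_nonpos hkR (by exact_mod_cast hkq'.le) (by linarith)
  have hden : 1 / (4 * (k : ℝ) ^ 2) ≤ 1 / ((q : ℝ) * q') := by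
    have h1 : (q : ℝ) ≤ 2 * k := by exact_mod_cast hq2
    have h2 : (q' : ℝ) ≤ 2 * k := by exact_mod_cast hq2'
    apply one_div_le_one_div_of_le (mul_pos hq0 hq0')
    calc (q : ℝ) * q' ≤ (2 * k) * (2 * k) := by gcongr
      _ = 4 * (k : ℝ) ^ 2 := by ring
  rw [Set.eq_empty_iff_forall_notMem]
  rintro x ⟨hx, hx'⟩
  obtain ⟨hx1, hx2⟩ := hx i (Set.mem_univ i)
  obtain ⟨hx1', hx2'⟩ := hx' i (Set.mem_univ i)
  have hclose : |(p i : ℝ) / q - (p' i : ℝ) / q'| < (q : ℝ) ^ (-τ) + (q' : ℝ) ^ (-τ) := by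
    rw [abs_lt]
    constructor <;> linarith
  linarith
end

section
/- Let n ≥ 1 be an integer and τ > 1 a real number. Let q_0 ∈ ℕ, p_0 ∈ ℤ^n, and let q_1 ∈ ℕ satisfy q_0 < q_1 < q_0^τ / 4. Then there exists at most one vector p_1 ∈ ℤ^n such that C_τ(p_1/q_1) ∩ C_τ(p_0/q_0) ≠ ∅. -/
/-!
If both cubes centred at `p₁/q₁` and `p₁'/q₁` meet the cube centred at `p₀/q₀`, then in each
coordinate both centres lie within `q₁^{-τ} + q₀^{-τ} ≤ 2 q₀^{-τ}` of `p₀ᵢ/q₀`, so they are less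
than `4 q₀^{-τ} < 1/q₁` apart. Distinct fractions with denominator `q₁` are at least `1/q₁` apart.
-/

open scoped ENNReal

theorem Ctau_intersecting_unique (n : ℕ) (hn : 1 ≤ n) (τ : ℝ) (hτ : 1 < τ)
    (q₀ : ℕ) (hq₀ : 0 < q₀) (p₀ : Fin n → ℤ) (q₁ : ℕ) (hq₁ : q₀ < q₁)
    (hq₁' : (q₁ : ℝ) < (q₀ : ℝ) ^ τ / 4) :
    ∀ p₁ p₁' : Fin n → ℤ,
      (Ctau n τ p₁ q₁ ∩ Ctau n τ p₀ q₀).Nonempty →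
      (Ctau n τ p₁' q₁ ∩ Ctau n τ p₀ q₀).Nonempty → p₁ = p₁' := by
  intro p₁ p₁' ⟨x, hx₁, hx₀⟩ ⟨y, hy₁, hy₀⟩
  have h₀ : (0 : ℝ) < q₀ := by exact_mod_cast hq₀
  have h₀₁ : (q₀ : ℝ) < q₁ := by exact_mod_cast hq₁
  have h₁ : (0 : ℝ) < q₁ := h₀.trans h₀₁
  have hle : (q₁ : ℝ) ^ (-τ) ≤ (q₀ : ℝ) ^ (-τ) :=
    Real.rpow_le_rpow_of_nonpos h₀ h₀₁.le (by linarith)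
  have hpos : (0 : ℝ) < (q₀ : ℝ) ^ τ := Real.rpow_pos_of_pos h₀ τ
  have hsmall : 4 * (q₀ : ℝ) ^ (-τ) * q₁ < 1 := by
    rw [Real.rpow_neg h₀.le, ← div_eq_mul_inv, div_mul_eq_mul_div, div_lt_one hpos]
    linarith
  funext i
  have a := hx₁ i (Set.mem_univ i)
  have b := hx₀ i (Set.mem_univ i)
  have c := hy₁ i (Set.mem_univ i)
  have d := hy₀ i (Set.mem_univ i)
  simp only [Set.mem_Ioo] at a b c d
  have habs : |((p₁ i : ℝ) - p₁' i) / q₁| < 4 * (q₀ : ℝ) ^ (-τ) := by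
    rw [sub_div, abs_lt]
    constructor <;> linarith [a.1, a.2, b.1, b.2, c.1, c.2, d.1, d.2]
  rw [abs_div, abs_of_pos h₁, div_lt_iff₀ h₁] at habs
  have hint : |p₁ i - p₁' i| < 1 := by exact_mod_cast habs.trans hsmall
  exact sub_eq_zero.mp (Int.abs_lt_one_iff.mp hint)
end
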